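/- arXiv:2012.14362 — 3 statements merged into one kernel-verified Lean document; each statement's English description precedes it below -/
import Mathlib

section
/- Let n ≥ 1 and let ψ : ℝ × ℝⁿ → ℂ be smooth such that for each t the functions ψ(t,·) and ∂ₜψ(t,·) are Schwartz, with Schwartz seminorms locally bounded in t, and ψ satisfies the free Schrödinger equation i∂ₜψ(t,x) = −Δψ(t,x) on ℝ × ℝⁿ. Then the function t ↦ ∫_{ℝⁿ} ‖x ψ(t,x) + 2it ∇ₓψ(t,x)‖²_{ℂⁿ} dx is constant on ℝ. -/
open MeasureTheory Complex

noncomputable section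

/-- Partial derivative in the `i`-th coordinate direction. -/
def pd {n : ℕ} (f : EuclideanSpace ℝ (Fin n) → ℂ) (i : Fin n)
    (x : EuclideanSpace ℝ (Fin n)) : ℂ :=
  fderiv ℝ f x (EuclideanSpace.single i 1)

/-- The Laplacian `Δf = ∑ i ∂²f/∂xᵢ²`. -/
def lap {n : ℕ} (f : EuclideanSpace ℝ (Fin n) → ℂ)
    (x : EuclideanSpace ℝ (Fin n)) : ℂ :=
  ∑ i, pd (fun y => pd f i y) i x

/-- Squared norm of the gradient, `‖∇f(x)‖²_{ℂⁿ} = ∑ i ‖∂ᵢf(x)‖²`. -/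
def gradNormSq {n : ℕ} (f : EuclideanSpace ℝ (Fin n) → ℂ)
    (x : EuclideanSpace ℝ (Fin n)) : ℝ :=
  ∑ i, ‖pd f i x‖ ^ 2

/-- `x·∇V(x) = ∑ i xᵢ ∂V/∂xᵢ(x)` for a real-valued potential `V`. -/
def xdotGrad {n : ℕ} (V : EuclideanSpace ℝ (Fin n) → ℝ)
    (x : EuclideanSpace ℝ (Fin n)) : ℝ :=
  ∑ i, x i * fderiv ℝ V x (EuclideanSpace.single i 1)

/-- Time derivative `∂ₜψ(t,x)`. -/
def tderiv {n : ℕ} (ψ : ℝ → EuclideanSpace ℝ (Fin n) → ℂ) (t : ℝ)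
    (x : EuclideanSpace ℝ (Fin n)) : ℂ :=
  deriv (fun s => ψ s x) t

/-- `ψ(t,·)` is Schwartz for each `t`, with Schwartz seminorms locally bounded
in `t`: on each compact time interval all weighted derivative bounds are uniform. -/
def LocUnifSchwartz {n : ℕ} (ψ : ℝ → EuclideanSpace ℝ (Fin n) → ℂ) : Prop :=
  ∀ (k m : ℕ) (T : ℝ), ∃ C : ℝ, ∀ t ∈ Set.Icc (-T) T,
    ∀ x : EuclideanSpace ℝ (Fin n),
      ‖x‖ ^ k * ‖iteratedFDeriv ℝ m (ψ t) x‖ ≤ C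

/-- The conformal factor `‖(x−2pt)ψ(t)‖² = ∫_{ℝⁿ} ‖xψ(t,x) + 2it∇ₓψ(t,x)‖²_{ℂⁿ} dx`. -/
def conformalFactor {n : ℕ} (ψ : ℝ → EuclideanSpace ℝ (Fin n) → ℂ) (t : ℝ) : ℝ :=
  ∫ x : EuclideanSpace ℝ (Fin n),
    ∑ i, ‖(x i : ℂ) * ψ t x + 2 * Complex.I * (t : ℂ) * pd (ψ t) i x‖ ^ 2

/-!
With `p = -i∇`, the component `J_v(t) = ⟪x, v⟫ + 2it∂_v` of `x - 2pt` commutes with `i∂ₜ + Δ`: the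
commutator `[Δ, ⟪x, v⟫] = 2∂_v` cancels `[i∂ₜ, 2it∂_v] = -2∂_v`. Hence `J_v` maps free solutions to
free solutions, whose `L²` norm is conserved because `Δ` is symmetric. The conformal factor is the
sum of the squared norms of `J_v(t) ψ(t)` over the coordinate directions `v`.
-/

open Bornology
open scoped SchwartzMap LineDeriv Laplacian Topology ContDiff

section MixedDerivative

variable {E F : Type*} [NormedAddCommGroup E] [NormedSpace ℝ E] [NormedAddCommGroup F]
  [NormedSpace ℝ F]

theorem hasDerivAt_fderiv_apply_of_contDiff_two {Ψ : ℝ × E → F} (hΨ : ContDiff ℝ 2 Ψ) {t : ℝ}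
    {dΨ : E → F} (hdΨ : ∀ y, HasDerivAt (fun s ↦ Ψ (s, y)) (dΨ y) t) (x v : E) :
    HasDerivAt (fun s ↦ fderiv ℝ (fun y ↦ Ψ (s, y)) x v) (fderiv ℝ dΨ x v) t := by
  have hfirst (p : ℝ × E) : HasFDerivAt Ψ (fderiv ℝ Ψ p) p :=
    (hΨ.differentiable two_ne_zero p).hasFDerivAt
  have hsecond : HasFDerivAt (fderiv ℝ Ψ) (fderiv ℝ (fderiv ℝ Ψ) (t, x)) (t, x) :=
    ((hΨ.fderiv_right (m := 1) le_rfl).differentiable one_ne_zero _).hasFDerivAt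
  have htime (y : E) : HasDerivAt (fun r : ℝ ↦ (r, y)) ((1 : ℝ), (0 : E)) t :=
    (hasDerivAt_id t).prodMk (hasDerivAt_const t y)
  have hspace_eq (s : ℝ) : fderiv ℝ (fun y ↦ Ψ (s, y)) x v = fderiv ℝ Ψ (s, x) (0, v) := by
    have h : HasFDerivAt (fun y ↦ Ψ (s, y)) ((fderiv ℝ Ψ (s, x)).comp (.inr ℝ ℝ E)) x :=
      (hfirst (s, x)).comp x (hasFDerivAt_prodMk_right s x)
    simp [h.fderiv]
  have htime_eq (y : E) : dΨ y = fderiv ℝ Ψ (t, y) (1, 0) :=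
    (hdΨ y).unique ((hfirst (t, y)).comp_hasDerivAt t (htime y))
  have hspace_time : HasDerivAt (fun s ↦ fderiv ℝ Ψ (s, x) (0, v))
      (fderiv ℝ (fderiv ℝ Ψ) (t, x) (1, 0) (0, v)) t := by
    have h : HasDerivAt (fun s ↦ fderiv ℝ Ψ (s, x)) (fderiv ℝ (fderiv ℝ Ψ) (t, x) (1, 0)) t :=
      hsecond.comp_hasDerivAt t (htime x)
    simpa using h.clm_apply (hasDerivAt_const t ((0 : ℝ), v))
  have htime_space : fderiv ℝ (fun y ↦ fderiv ℝ Ψ (t, y) (1, 0)) x v =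
      fderiv ℝ (fderiv ℝ Ψ) (t, x) (0, v) (1, 0) := by
    have h : HasFDerivAt (fun y ↦ fderiv ℝ Ψ (t, y))
        ((fderiv ℝ (fderiv ℝ Ψ) (t, x)).comp (.inr ℝ ℝ E)) x :=
      hsecond.comp x (hasFDerivAt_prodMk_right t x)
    rw [fderiv_clm_apply h.differentiableAt (differentiableAt_const _), h.fderiv]
    simp
  rw [funext hspace_eq, funext htime_eq, htime_space,
    hΨ.contDiffAt.isSymmSndFDerivAt (by simp) (0, v) (1, 0)]
  exact hspace_time

end MixedDerivative

section SchwartzOperators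

variable {E F : Type*} [NormedAddCommGroup E] [NormedAddCommGroup F] [NormedSpace ℝ F]

theorem schwartz_lineDerivOp_comm [NormedSpace ℝ E] (v w : E) (f : 𝓢(E, F)) :
    ∂_{v} (∂_{w} f) = ∂_{w} (∂_{v} f) := by
  have second_deriv (v w : E) (x : E) :
      ∂_{v} (∂_{w} f) x = fderiv ℝ (fderiv ℝ f) x v w := by
    have hd : DifferentiableAt ℝ (fderiv ℝ f) x :=
      ((f.smooth 2).fderiv_right (m := 1) le_rfl).differentiable one_ne_zero x
    change fderiv ℝ (fun y ↦ fderiv ℝ f y w) x v = _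
    simp [fderiv_clm_apply hd (differentiableAt_const w)]
  ext x
  rw [second_deriv, second_deriv]
  exact (f.smooth 2).contDiffAt.isSymmSndFDerivAt (by simp) v w

variable [InnerProductSpace ℝ E]

theorem lineDerivOp_smulLeftCLM_inner (v w : E) (f : 𝓢(E, F)) :
    ∂_{w} (SchwartzMap.smulLeftCLM F (inner ℝ · v) f) =
      SchwartzMap.smulLeftCLM F (inner ℝ · v) (∂_{w} f) + inner ℝ w v • f := by
  have hg : (inner ℝ · v : E → ℝ).HasTemperateGrowth := by fun_prop
  ext x
  have hinner : HasFDerivAt (inner ℝ · v : E → ℝ) ((innerSL ℝ).flip v) x :=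
    ((innerSL ℝ).flip v).hasFDerivAt
  have hprod := hinner.smul (f.hasFDerivAt x)
  rw [SchwartzMap.lineDerivOp_apply_eq_fderiv, SchwartzMap.smulLeftCLM_apply hg]
  calc fderiv ℝ (fun y ↦ inner ℝ y v • f y) x w
      = (inner ℝ x v • fderiv ℝ f x + ((innerSL ℝ).flip v).smulRight (f x)) w :=
        congrArg (· w) hprod.fderiv
    _ = _ := by
        simp [SchwartzMap.smulLeftCLM_apply_apply hg, SchwartzMap.lineDerivOp_apply_eq_fderiv,
          -flip_innerSL_real]

variable [FiniteDimensional ℝ E]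

theorem lineDerivOp_laplacian_comm (v : E) (f : 𝓢(E, F)) : ∂_{v} (Δ f) = Δ (∂_{v} f) := by
  simp only [SchwartzMap.laplacian_eq_sum (stdOrthonormalBasis ℝ E),
    LineDeriv.lineDerivOp_sum, schwartz_lineDerivOp_comm v]

theorem laplacian_smulLeftCLM_inner (v : E) (f : 𝓢(E, F)) :
    Δ (SchwartzMap.smulLeftCLM F (inner ℝ · v) f) =
      SchwartzMap.smulLeftCLM F (inner ℝ · v) (Δ f) + (2 : ℝ) • ∂_{v} f := by
  let b := stdOrthonormalBasis ℝ E
  have hv : ∂_{v} f = ∑ i, inner ℝ (b i) v • ∂_{b i} f := by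
    conv_lhs => rw [← b.sum_repr' v]
    simp only [LineDeriv.lineDerivOp_left_sum, LineDeriv.lineDerivOp_left_smul]
  simp only [SchwartzMap.laplacian_eq_sum b, lineDerivOp_smulLeftCLM_inner,
    LineDeriv.lineDerivOp_add, LineDeriv.lineDerivOp_smul, add_assoc, ← two_smul ℝ,
    Finset.sum_add_distrib, map_sum, hv, Finset.smul_sum]

end SchwartzOperators

section LocallyBounded

variable {V W : Type*} [AddCommGroup V] [Module ℝ V] [TopologicalSpace V]
  [AddCommGroup W] [Module ℝ W] [TopologicalSpace W]

/-- A curve in a topological vector space is locally bounded if it maps some neighbourhood of each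
time into a von Neumann bounded set. In Schwartz space this says that every seminorm of `u t` is
bounded locally uniformly in `t`. -/
def LocallyVonNBounded (u : ℝ → V) : Prop :=
  ∀ t, ∃ s ∈ 𝓝 t, IsVonNBounded ℝ (u '' s)

theorem LocallyVonNBounded.add [ContinuousAdd V] {u w : ℝ → V}
    (hu : LocallyVonNBounded u) (hw : LocallyVonNBounded w) :
    LocallyVonNBounded fun t ↦ u t + w t := by
  intro t
  obtain ⟨s, hs, hus⟩ := hu t
  obtain ⟨r, hr, hwr⟩ := hw t
  refine ⟨s ∩ r, Filter.inter_mem hs hr, (hus.add hwr).subset ?_⟩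
  rintro _ ⟨τ, ⟨hτs, hτr⟩, rfl⟩
  exact Set.add_mem_add (Set.mem_image_of_mem u hτs) (Set.mem_image_of_mem w hτr)

theorem LocallyVonNBounded.clm_comp {u : ℝ → V} (hu : LocallyVonNBounded u) (L : V →L[ℝ] W) :
    LocallyVonNBounded fun t ↦ L (u t) := by
  intro t
  obtain ⟨s, hs, hus⟩ := hu t
  exact ⟨s, hs, by simpa only [Set.image_image] using hus.image L⟩

end LocallyBounded

section SchwartzBounded

variable {E F : Type*} [NormedAddCommGroup E] [NormedSpace ℝ E] [NormedAddCommGroup F]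
  [NormedSpace ℝ F]

theorem LocallyVonNBounded.continuous_smul [NormedSpace ℂ F] [SMulCommClass ℝ ℂ F]
    {u : ℝ → 𝓢(E, F)} (hu : LocallyVonNBounded u) {c : ℝ → ℂ} (hc : Continuous c) :
    LocallyVonNBounded fun t ↦ c t • u t := by
  intro t
  obtain ⟨s, hs, hus⟩ := hu t
  refine ⟨s ∩ {τ | ‖c τ‖ < ‖c t‖ + 1}, Filter.inter_mem hs
    (hc.norm.continuousAt.eventually_lt continuousAt_const (lt_add_one _)), ?_⟩
  rw [(schwartz_withSeminorms ℝ E F).image_isVonNBounded_iff_seminorm_bounded] at hus ⊢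
  intro km
  obtain ⟨r, hr, hur⟩ := hus km
  refine ⟨(‖c t‖ + 1) * r, by positivity, fun τ ⟨hτs, hτ⟩ ↦ ?_⟩
  calc SchwartzMap.seminorm ℝ km.1 km.2 (c τ • u τ)
      = ‖c τ‖ * SchwartzMap.seminorm ℝ km.1 km.2 (u τ) :=
        map_smul_eq_mul (SchwartzMap.seminorm ℂ km.1 km.2) (c τ) (u τ)
    _ < (‖c t‖ + 1) * r :=
        mul_lt_mul'' hτ (hur τ hτs) (norm_nonneg _) (apply_nonneg _ _)

theorem exists_norm_le_one_add_norm_rpow_of_isVonNBounded {B : Set 𝓢(E, F)}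
    (hB : IsVonNBounded ℝ B) (k : ℕ) :
    ∃ C, 0 ≤ C ∧ ∀ f ∈ B, ∀ x, ‖f x‖ ≤ C * (1 + ‖x‖) ^ (-(k : ℝ)) := by
  obtain ⟨r, hr, hBr⟩ := (schwartz_withSeminorms ℝ E F).isVonNBounded_iff_finset_seminorm_bounded.1
    hB (Finset.Iic (k, 0))
  refine ⟨2 ^ k * r, by positivity, fun f hf x ↦ ?_⟩
  have hx : (1 + ‖x‖) ^ k * ‖f x‖ ≤ 2 ^ k * r := by
    have h := SchwartzMap.one_add_le_sup_seminorm_apply (𝕜 := ℝ) (m := (k, 0)) le_rfl le_rfl f x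
    rw [norm_iteratedFDeriv_zero] at h
    exact h.trans (by gcongr; exact (hBr f hf).le)
  rw [Real.rpow_neg (by positivity), Real.rpow_natCast, ← div_eq_mul_inv,
    le_div_iff₀ (by positivity), mul_comm]
  exact hx

end SchwartzBounded

section MassDerivative

open scoped InnerProductSpace

variable {E F : Type*} [NormedAddCommGroup E] [NormedSpace ℝ E] [MeasurableSpace E]
  [OpensMeasurableSpace E] [SecondCountableTopology E] [NormedAddCommGroup F]

theorem schwartz_integrable_norm_sq [NormedSpace ℝ F] (f : 𝓢(E, F)) (μ : Measure E)
    [μ.HasTemperateGrowth] : Integrable (fun x ↦ ‖f x‖ ^ 2) μ :=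
  (memLp_two_iff_integrable_sq_norm (f.memLp 2 μ).1).1 (f.memLp 2 μ)

theorem hasDerivAt_integral_norm_sq_of_locallyVonNBounded [InnerProductSpace ℝ F]
    {μ : Measure E} [μ.HasTemperateGrowth] {u u' : ℝ → 𝓢(E, F)} (hu : LocallyVonNBounded u)
    (hu' : LocallyVonNBounded u') (hderiv : ∀ t x, HasDerivAt (fun s ↦ u s x) (u' t x) t)
    (t : ℝ) :
    HasDerivAt (fun s ↦ ∫ x, ‖u s x‖ ^ 2 ∂μ) (∫ x, 2 * ⟪u t x, u' t x⟫_ℝ ∂μ) t := by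
  obtain ⟨s, hs, hus⟩ := hu t
  obtain ⟨s', hs', hus'⟩ := hu' t
  obtain ⟨C, hC, huC⟩ := exists_norm_le_one_add_norm_rpow_of_isVonNBounded hus 0
  obtain ⟨C', -, huC'⟩ :=
    exists_norm_le_one_add_norm_rpow_of_isVonNBounded hus' μ.integrablePower
  refine (hasDerivAt_integral_of_dominated_loc_of_deriv_le
    (bound := fun x ↦ 2 * (C * (C' * (1 + ‖x‖) ^ (-(μ.integrablePower : ℝ)))))
    (Filter.inter_mem hs hs') (.of_forall fun τ ↦ ?_)
    (schwartz_integrable_norm_sq (u t) μ) ?_ (.of_forall fun x τ hτ ↦ ?_)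
    ((((Measure.integrable_pow_neg_integrablePower μ).const_mul C').const_mul C).const_mul 2)
    (.of_forall fun x τ _ ↦ (hderiv τ x).norm_sq)).2
  · exact (schwartz_integrable_norm_sq (u τ) μ).aestronglyMeasurable
  · exact (((u t).continuous.inner (u' t).continuous).const_mul 2).aestronglyMeasurable
  · have hux : ‖u τ x‖ ≤ C := by
      simpa using huC _ (Set.mem_image_of_mem u hτ.1) x
    have hux' := huC' _ (Set.mem_image_of_mem u' hτ.2) x
    rw [norm_mul, Real.norm_two]
    gcongr
    exact (norm_inner_le_norm _ _).trans (mul_le_mul hux hux' (norm_nonneg _) hC)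

end MassDerivative

section FreeSchrodinger

open scoped InnerProductSpace

variable {E : Type*} [NormedAddCommGroup E] [InnerProductSpace ℝ E]

/-- The component of `x - 2pt` along `v`, i.e. the operator `⟪x, v⟫ + 2it∂_v`. -/
def galileiOp (v : E) (t : ℝ) (f : 𝓢(E, ℂ)) : 𝓢(E, ℂ) :=
  SchwartzMap.smulLeftCLM ℂ (inner ℝ · v) f + (2 * I * t) • ∂_{v} f

theorem galileiOp_apply (v : E) (t : ℝ) (f : 𝓢(E, ℂ)) (x : E) :
    galileiOp v t f x = (⟪x, v⟫_ℝ : ℂ) * f x + 2 * I * t * ∂_{v} f x := by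
  have hg : (inner ℝ · v : E → ℝ).HasTemperateGrowth := by fun_prop
  simp [galileiOp, SchwartzMap.smulLeftCLM_apply_apply hg]

theorem LocallyVonNBounded.galileiOp {u : ℝ → 𝓢(E, ℂ)} (hu : LocallyVonNBounded u) (v : E) :
    LocallyVonNBounded fun t ↦ galileiOp v t (u t) :=
  (hu.clm_comp (SchwartzMap.smulLeftCLM ℂ (inner ℝ · v))).add <|
    (hu.clm_comp (LineDeriv.lineDerivOpCLM ℝ 𝓢(E, ℂ) v)).continuous_smul
      (c := fun t ↦ 2 * I * t) (by fun_prop)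

variable [FiniteDimensional ℝ E]

theorem laplacian_galileiOp (v : E) (t : ℝ) (f : 𝓢(E, ℂ)) :
    Δ (galileiOp v t f) = galileiOp v t (Δ f) + (2 : ℝ) • ∂_{v} f := by
  simp only [galileiOp, ← SchwartzMap.laplacianCLM_eq ℂ, map_add, map_smul]
  simp only [SchwartzMap.laplacianCLM_eq, laplacian_smulLeftCLM_inner, lineDerivOp_laplacian_comm]
  abel

/-- The free Schrödinger equation `i∂ₜu = -Δu` for a curve in Schwartz space, written as
`∂ₜu = iΔu` with the time derivative taken pointwise in `x`. -/
def SolvesFreeSchrodinger (u : ℝ → 𝓢(E, ℂ)) : Prop :=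
  ∀ t x, HasDerivAt (fun s ↦ u s x) (I * Δ (u t) x) t

theorem SolvesFreeSchrodinger.galileiOp {u : ℝ → 𝓢(E, ℂ)} (hu : SolvesFreeSchrodinger u)
    (hsmooth : ContDiff ℝ 2 fun p : ℝ × E ↦ u p.1 p.2) (v : E) :
    SolvesFreeSchrodinger fun t ↦ galileiOp v t (u t) := by
  intro t x
  have hlineDeriv : HasDerivAt (fun s ↦ ∂_{v} (u s) x) (I * ∂_{v} (Δ (u t)) x) t := by
    refine (hasDerivAt_fderiv_apply_of_contDiff_two hsmooth (hu t) x v).congr_deriv ?_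
    rw [fderiv_const_mul (Δ (u t)).differentiableAt]
    rfl
  have hcoeff : HasDerivAt (fun s : ℝ ↦ 2 * I * (s : ℂ)) (2 * I) t := by
    simpa using (hasDerivAt_id t).ofReal_comp.const_mul (2 * I)
  simp only [galileiOp_apply]
  refine (((hu t x).const_mul (⟪x, v⟫_ℝ : ℂ)).add (hcoeff.mul hlineDeriv)).congr_deriv ?_
  simp only [laplacian_galileiOp, _root_.add_apply, _root_.smul_apply, galileiOp_apply,
    real_smul, ofReal_ofNat]
  ring

variable [MeasurableSpace E] [BorelSpace E] (μ : Measure E) [μ.IsAddHaarMeasure]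

theorem integral_inner_I_mul_laplacian (f : 𝓢(E, ℂ)) :
    ∫ x, ⟪f x, I * Δ f x⟫_ℝ ∂μ = 0 := by
  let B : ℂ →L[ℝ] ℂ →L[ℝ] ℝ :=
    (innerSL ℝ).bilinearComp (.id ℝ ℂ) (ContinuousLinearMap.mul ℝ ℂ I)
  have hskew (a b : ℂ) : B a b = -B b a := by
    simp only [B, ContinuousLinearMap.bilinearComp_apply, ContinuousLinearMap.id_apply,
      ContinuousLinearMap.mul_apply', coe_innerSL_apply, Complex.inner, mul_re, mul_im, I_re, I_im,
      conj_re, conj_im]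
    ring
  have hself : ∫ x, B (f x) (Δ f x) ∂μ = -∫ x, B (f x) (Δ f x) ∂μ := by
    conv_lhs => rw [SchwartzMap.integral_bilinear_laplacian_right_eq_left]
    simp only [hskew (Δ f _), integral_neg]
  exact self_eq_neg.1 hself

theorem SolvesFreeSchrodinger.integral_norm_sq_eq {u : ℝ → 𝓢(E, ℂ)}
    (hu : SolvesFreeSchrodinger u) (hbdd : LocallyVonNBounded u) (t₁ t₂ : ℝ) :
    ∫ x, ‖u t₁ x‖ ^ 2 ∂μ = ∫ x, ‖u t₂ x‖ ^ 2 ∂μ := by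
  have hbdd' : LocallyVonNBounded fun t ↦ I • Δ (u t) :=
    (hbdd.clm_comp (LineDeriv.laplacianCLM ℝ E 𝓢(E, ℂ))).continuous_smul continuous_const
  have hderiv (t : ℝ) : HasDerivAt (fun s ↦ ∫ x, ‖u s x‖ ^ 2 ∂μ) 0 t := by
    refine (hasDerivAt_integral_norm_sq_of_locallyVonNBounded hbdd hbdd' hu t).congr_deriv ?_
    simp only [_root_.smul_apply, smul_eq_mul, integral_const_mul,
      integral_inner_I_mul_laplacian, mul_zero]
  exact is_const_of_deriv_eq_zero (fun t ↦ (hderiv t).differentiableAt)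
    (fun t ↦ (hderiv t).deriv) t₁ t₂

end FreeSchrodinger

section Coordinates

variable {n : ℕ} {ψ : ℝ → EuclideanSpace ℝ (Fin n) → ℂ}

/-- The curve in Schwartz space traced out by the slices `ψ t`. -/
def LocUnifSchwartz.schwartzMap (hS : LocUnifSchwartz ψ) (hψ : ∀ t, ContDiff ℝ ∞ (ψ t)) (t : ℝ) :
    𝓢(EuclideanSpace ℝ (Fin n), ℂ) where
  toFun := ψ t
  smooth' := hψ t
  decay' k m :=
    let ⟨C, hC⟩ := hS k m |t|
    ⟨C, hC t ⟨neg_abs_le t, le_abs_self t⟩⟩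

theorem LocUnifSchwartz.locallyVonNBounded_schwartzMap (hS : LocUnifSchwartz ψ)
    (hψ : ∀ t, ContDiff ℝ ∞ (ψ t)) : LocallyVonNBounded (hS.schwartzMap hψ) := by
  intro t
  have hnhds : Set.Icc (-(|t| + 1)) (|t| + 1) ∈ 𝓝 t :=
    Icc_mem_nhds (by linarith [neg_abs_le t]) (by linarith [le_abs_self t])
  refine ⟨_, hnhds,
    ((schwartz_withSeminorms ℝ _ ℂ).image_isVonNBounded_iff_seminorm_bounded _).2 fun km ↦ ?_⟩
  obtain ⟨C, hC⟩ := hS km.1 km.2 (|t| + 1)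
  refine ⟨|C| + 1, by positivity, fun τ hτ ↦ lt_of_le_of_lt ?_ (lt_add_one |C|)⟩
  exact SchwartzMap.seminorm_le_bound ℝ km.1 km.2 _ (abs_nonneg C)
    fun x ↦ (hC τ hτ x).trans (le_abs_self C)

theorem laplacian_apply_eq_lap (f : 𝓢(EuclideanSpace ℝ (Fin n), ℂ))
    (x : EuclideanSpace ℝ (Fin n)) : Δ f x = lap f x := by
  simp only [SchwartzMap.laplacian_eq_sum (EuclideanSpace.basisFun (Fin n) ℝ), _root_.sum_apply,
    EuclideanSpace.basisFun_apply]
  rfl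

theorem LocUnifSchwartz.solvesFreeSchrodinger_schwartzMap (hS : LocUnifSchwartz ψ)
    (hψ : ∀ t, ContDiff ℝ ∞ (ψ t)) (hdiff : ∀ x, Differentiable ℝ fun t ↦ ψ t x)
    (heq : ∀ t x, I * tderiv ψ t x = -lap (ψ t) x) :
    SolvesFreeSchrodinger (hS.schwartzMap hψ) := by
  intro t x
  refine (hdiff x t).hasDerivAt.congr_deriv ?_
  rw [laplacian_apply_eq_lap]
  change tderiv ψ t x = I * lap (ψ t) x
  linear_combination (-I) * heq t x + tderiv ψ t x * I_sq

theorem conformalFactor_eq_sum_integral_galileiOp (u : ℝ → 𝓢(EuclideanSpace ℝ (Fin n), ℂ))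
    (t : ℝ) :
    conformalFactor (fun t ↦ u t) t =
      ∑ i, ∫ x, ‖galileiOp (EuclideanSpace.single i 1) t (u t) x‖ ^ 2 := by
  rw [← integral_finsetSum _ fun i _ ↦ schwartz_integrable_norm_sq _ volume]
  simp only [galileiOp_apply, EuclideanSpace.inner_single_right, one_mul, conj_trivial]
  rfl

end Coordinates

/-- For a solution of the free Schrödinger equation `i∂ₜψ = −Δψ` with Schwartz
data (seminorms locally bounded in time), the conformal factor
`t ↦ ∫ ‖xψ(t,x) + 2it∇ₓψ(t,x)‖² dx` is constant: `D_{H₀}|x−2pt|² = 0`. -/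
theorem conformal_factor_constant_free {n : ℕ} (hn : 1 ≤ n)
    (ψ : ℝ → EuclideanSpace ℝ (Fin n) → ℂ)
    (hψ : ContDiff ℝ (⊤ : ℕ∞) (fun p : ℝ × EuclideanSpace ℝ (Fin n) => ψ p.1 p.2))
    (hS : LocUnifSchwartz ψ)
    (hS' : LocUnifSchwartz (fun t => tderiv ψ t))
    (heq : ∀ t x, Complex.I * tderiv ψ t x = -lap (ψ t) x) :
    ∀ t₁ t₂ : ℝ, conformalFactor ψ t₁ = conformalFactor ψ t₂ := by
  have hslice (t : ℝ) : ContDiff ℝ ∞ (ψ t) := hψ.comp (contDiff_prodMk_right t)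
  have hdiff (x : EuclideanSpace ℝ (Fin n)) : Differentiable ℝ fun t ↦ ψ t x :=
    (hψ.comp (contDiff_prodMk_left x)).differentiable (by simp)
  let u := hS.schwartzMap hslice
  have hu : SolvesFreeSchrodinger u := hS.solvesFreeSchrodinger_schwartzMap hslice hdiff heq
  have hbdd : LocallyVonNBounded u := hS.locallyVonNBounded_schwartzMap hslice
  intro t₁ t₂
  change conformalFactor (fun t ↦ u t) t₁ = conformalFactor (fun t ↦ u t) t₂
  simp only [conformalFactor_eq_sum_integral_galileiOp]
  refine Finset.sum_congr rfl fun i _ ↦ ?_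
  exact (hu.galileiOp (hψ.of_le (by norm_cast)) _).integral_norm_sq_eq volume
    (hbdd.galileiOp _) t₁ t₂

end
end

section
/- Let n ≥ 1, let V : ℝⁿ → ℝ be smooth with V and all its derivatives bounded, and let ψ : ℝ × ℝⁿ → ℂ be smooth such that for each t the functions ψ(t,·) and ∂ₜψ(t,·) are Schwartz, with Schwartz seminorms locally bounded in t, and ψ satisfies i∂ₜψ(t,x) = −Δψ(t,x) + V(x)ψ(t,x) on ℝ × ℝⁿ. Define a(t) := Re ∫_{ℝⁿ} conj(ψ(t,x)) · (−i)(x·∇ₓψ(t,x) + (n/2)ψ(t,x)) dx. Then for every t, a is differentiable at t with a'(t) = 2∫_{ℝⁿ} ‖∇ₓψ(t,x)‖²_{ℂⁿ} dx − ∫_{ℝⁿ} (x·∇V(x)) |ψ(t,x)|² dx. -/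
open MeasureTheory Complex

noncomputable section

/-!
Write `H = -Δ + V` and `A = -i(x·∇ + n/2)`. Since `H` is symmetric, `i ∂ₜψ = Hψ` gives
`d/dt ⟨ψ, Aψ⟩ = ⟨ψ, i[H, A]ψ⟩`; the locally uniform Schwartz bounds on `ψ` pass to `Hψ`, `Aψ` and
`AHψ` by continuity of the operators, and so dominate the differentiated integrand. In the
commutator, `[∂ᵥ, x·∇] = ∂ᵥ` yields `[Δ, x·∇] = 2Δ`, the product rule yields
`[V, x·∇] = -x·∇V`, and the constant `n/2` drops out, so `i[H, A] = -2Δ - x·∇V`. One integration by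
parts turns `-⟨ψ, Δψ⟩` into `‖∇ψ‖²`.
-/

open scoped SchwartzMap LineDeriv Laplacian Topology

theorem lie_mul_self_eq_two_nsmul {R : Type*} [Ring R] {a c : R} (h : ⁅a, c⁆ = a) :
    ⁅a * a, c⁆ = 2 • (a * a) := by
  rw [Ring.lie_def, sub_eq_iff_eq_add] at h ⊢
  rw [mul_assoc, h, mul_add, ← mul_assoc, h]
  noncomm_ring

section Operators

variable {𝕜 E F : Type*} [RCLike 𝕜] [NormedAddCommGroup E] [NormedSpace ℝ E]
  [NormedAddCommGroup F] [NormedSpace ℝ F] [NormedSpace 𝕜 F]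

theorem hasTemperateGrowth_fderiv {f : E → F} (hf : f.HasTemperateGrowth) :
    (fderiv ℝ f).HasTemperateGrowth := by
  refine ⟨hf.1.fderiv_right (by norm_cast), fun m => ?_⟩
  simpa only [norm_iteratedFDeriv_fderiv] using hf.2 (m + 1)

theorem hasTemperateGrowth_fderiv_apply_self {f : E → F} (hf : f.HasTemperateGrowth) :
    (fun x => fderiv ℝ f x x).HasTemperateGrowth :=
  (ContinuousLinearMap.id ℝ (E →L[ℝ] F)).bilinear_hasTemperateGrowth
    (hasTemperateGrowth_fderiv hf) .id'

theorem hasTemperateGrowth_ofReal_comp {V : E → ℝ} (hV : V.HasTemperateGrowth) :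
    (fun x => (V x : ℂ)).HasTemperateGrowth :=
  ofRealCLM.hasTemperateGrowth.comp hV

variable (𝕜 E F) in
/-- The Euler operator `x·∇`. -/
def eulerCLM : 𝓢(E, F) →L[𝕜] 𝓢(E, F) where
  toFun f := SchwartzMap.bilinLeftCLM (ContinuousLinearMap.id ℝ (E →L[ℝ] F)) .id
    (SchwartzMap.fderivCLM ℝ E F f)
  map_add' f g := by simp only [map_add]
  map_smul' c f := by
    ext x
    simp [fderiv_const_smul f.differentiableAt]
  cont := ((SchwartzMap.bilinLeftCLM (ContinuousLinearMap.id ℝ (E →L[ℝ] F)) .id).comp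
    (SchwartzMap.fderivCLM ℝ E F)).continuous

@[simp]
theorem eulerCLM_apply (f : 𝓢(E, F)) (x : E) : eulerCLM 𝕜 E F f x = fderiv ℝ f x x := rfl

theorem fderiv_fderiv_apply_self {f : E → F} (hf : ContDiff ℝ 2 f) (x v : E) :
    fderiv ℝ (fun y => fderiv ℝ f y y) x v =
      fderiv ℝ (fun y => fderiv ℝ f y v) x x + fderiv ℝ f x v := by
  have hf' : DifferentiableAt ℝ (fderiv ℝ f) x :=
    (hf.fderiv_right (m := 1) le_rfl).differentiable one_ne_zero x
  have hsymm : IsSymmSndFDerivAt ℝ f x := hf.contDiffAt.isSymmSndFDerivAt (by simp)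
  rw [fderiv_clm_apply hf' differentiableAt_fun_id, fderiv_clm_apply hf' (by fun_prop)]
  simp [hsymm x v, add_comm]

theorem lie_lineDerivOpCLM_eulerCLM (v : E) :
    ⁅LineDeriv.lineDerivOpCLM 𝕜 𝓢(E, F) v, eulerCLM 𝕜 E F⁆ = LineDeriv.lineDerivOpCLM 𝕜 _ v := by
  ext f x
  have h := fderiv_fderiv_apply_self (f.smooth 2) x v
  exact sub_eq_iff_eq_add'.mpr h

theorem lie_smulLeftCLM_eulerCLM {g : E → 𝕜} (hg : g.HasTemperateGrowth) :
    ⁅SchwartzMap.smulLeftCLM F g, eulerCLM 𝕜 E F⁆ =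
      -SchwartzMap.smulLeftCLM F (fun x => fderiv ℝ g x x) := by
  ext f x
  have hfg : fderiv ℝ (SchwartzMap.smulLeftCLM F g f) x =
      g x • fderiv ℝ f x + (fderiv ℝ g x).smulRight (f x) := by
    rw [SchwartzMap.smulLeftCLM_apply hg]
    exact fderiv_fun_smul (hg.1.differentiable (by simp) x) f.differentiableAt
  simp [Ring.lie_def, hg, hasTemperateGrowth_fderiv_apply_self hg, hfg]

end Operators

section Laplacian

variable {𝕜 E F : Type*} [RCLike 𝕜] [NormedAddCommGroup E] [InnerProductSpace ℝ E]
  [FiniteDimensional ℝ E] [NormedAddCommGroup F] [NormedSpace ℝ F] [NormedSpace 𝕜 F]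

theorem lie_laplacianCLM_eulerCLM :
    ⁅LineDeriv.laplacianCLM 𝕜 E 𝓢(E, F), eulerCLM 𝕜 E F⁆ =
      2 • LineDeriv.laplacianCLM 𝕜 E 𝓢(E, F) := by
  have hΔ : LineDeriv.laplacianCLM 𝕜 E 𝓢(E, F) = ∑ i,
      LineDeriv.lineDerivOpCLM 𝕜 𝓢(E, F) (stdOrthonormalBasis ℝ E i) *
        LineDeriv.lineDerivOpCLM 𝕜 𝓢(E, F) (stdOrthonormalBasis ℝ E i) := rfl
  rw [hΔ, Finset.smul_sum]
  simp only [Ring.lie_def, Finset.sum_mul, Finset.mul_sum, ← Finset.sum_sub_distrib]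
  exact Finset.sum_congr rfl fun i _ =>
    lie_mul_self_eq_two_nsmul (lie_lineDerivOpCLM_eulerCLM _)

end Laplacian

section Hamiltonian

variable {E : Type*} [NormedAddCommGroup E] [InnerProductSpace ℝ E] [FiniteDimensional ℝ E]

/-- The Schrödinger operator `H = -Δ + V` on Schwartz functions; meaningful when `V` has temperate
growth, since `SchwartzMap.smulLeftCLM` is zero otherwise. -/
def schrodingerCLM (V : E → ℝ) : 𝓢(E, ℂ) →L[ℂ] 𝓢(E, ℂ) :=
  -LineDeriv.laplacianCLM ℂ E 𝓢(E, ℂ) + SchwartzMap.smulLeftCLM ℂ (fun x => (V x : ℂ))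

variable (E) in
/-- The generator of dilations `A = ½(x·p + p·x)` with `p = -i∇`, in normally ordered form
`A = -i(x·∇ + n/2)`, where `n = dim E`. -/
def dilationCLM : 𝓢(E, ℂ) →L[ℂ] 𝓢(E, ℂ) :=
  (-I) • (eulerCLM ℂ E ℂ + (Module.finrank ℝ E / 2 : ℂ) • 1)

theorem lie_schrodingerCLM_dilationCLM {V : E → ℝ} (hV : V.HasTemperateGrowth) :
    I • ⁅schrodingerCLM V, dilationCLM E⁆ = -(2 : ℂ) • LineDeriv.laplacianCLM ℂ E 𝓢(E, ℂ) -
      SchwartzMap.smulLeftCLM ℂ (fun x => ((fderiv ℝ V x x : ℝ) : ℂ)) := by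
  have hVx : (fun x => ((fderiv ℝ V x x : ℝ) : ℂ)) =
      fun x => fderiv ℝ (fun y => (V y : ℂ)) x x := by
    ext x
    have h := ofRealCLM.hasFDerivAt.comp x (hV.1.differentiable (by simp) x).hasFDerivAt
    exact DFunLike.congr_fun h.fderiv.symm x
  have hL := lie_laplacianCLM_eulerCLM (𝕜 := ℂ) (E := E) (F := ℂ)
  have hM := lie_smulLeftCLM_eulerCLM (F := ℂ) (hasTemperateGrowth_ofReal_comp hV)
  rw [hVx, schrodingerCLM, dilationCLM]
  calc I • ⁅-LineDeriv.laplacianCLM ℂ E 𝓢(E, ℂ) + SchwartzMap.smulLeftCLM ℂ (fun x => (V x : ℂ)),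
        (-I) • (eulerCLM ℂ E ℂ + (Module.finrank ℝ E / 2 : ℂ) • 1)⁆
      = -⁅LineDeriv.laplacianCLM ℂ E 𝓢(E, ℂ), eulerCLM ℂ E ℂ⁆ +
          ⁅SchwartzMap.smulLeftCLM ℂ (fun x => (V x : ℂ)), eulerCLM ℂ E ℂ⁆ := by
        simp only [Ring.lie_def, mul_smul_comm, smul_mul_assoc, mul_add, add_mul, mul_one, one_mul,
          smul_add, smul_sub, smul_smul, neg_mul, mul_neg]
        match_scalars <;> simp
    _ = _ := by
        rw [hL, hM]; module

end Hamiltonian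

section LocallyBounded

variable {T X Y : Type*} [TopologicalSpace T] [AddCommGroup X] [Module ℝ X] [TopologicalSpace X]
  [AddCommGroup Y] [Module ℝ Y] [TopologicalSpace Y]

/-- A family of vectors in a topological vector space is locally bounded if near every parameter
its values form a von Neumann bounded set. -/
def LocallyBounded (u : T → X) : Prop :=
  ∀ t, ∃ s ∈ 𝓝 t, Bornology.IsVonNBounded ℝ (u '' s)

theorem LocallyBounded.map {u : T → X} (hu : LocallyBounded u) (A : X →L[ℝ] Y) :
    LocallyBounded (fun t => A (u t)) := fun t => by
  obtain ⟨s, hs, hb⟩ := hu t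
  exact ⟨s, hs, by simpa only [Set.image_image] using hb.image A⟩

variable {E F : Type*} [NormedAddCommGroup E] [NormedSpace ℝ E]
  [NormedAddCommGroup F] [NormedSpace ℝ F]

theorem LocallyBounded.exists_eventually_norm_le {u : T → 𝓢(E, F)} (hu : LocallyBounded u)
    (t : T) : ∃ C, ∀ᶠ s in 𝓝 t, ∀ x, ‖u s x‖ ≤ C := by
  obtain ⟨s, hs, hb⟩ := hu t
  obtain ⟨C, -, hC⟩ :=
    ((schwartz_withSeminorms ℝ E F).image_isVonNBounded_iff_seminorm_bounded u).1 hb (0, 0)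
  exact ⟨C, Filter.mem_of_superset hs fun r hr x =>
    (SchwartzMap.norm_le_seminorm ℝ (u r) x).trans (hC r hr).le⟩

theorem LocallyBounded.exists_integrable_eventually_norm_le [MeasurableSpace E] (μ : Measure E)
    [μ.HasTemperateGrowth] {u : T → 𝓢(E, F)} (hu : LocallyBounded u) (t : T) :
    ∃ g : E → ℝ, Integrable g μ ∧ ∀ᶠ s in 𝓝 t, ∀ x, ‖u s x‖ ≤ g x := by
  obtain ⟨s, hs, hb⟩ := hu t
  set N := μ.integrablePower
  obtain ⟨C, -, hC⟩ :=
    ((schwartz_withSeminorms ℝ E F).image_isVonNBounded_iff_finset_seminorm_bounded u).1 hb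
      (Finset.Iic (N, 0))
  refine ⟨_, (Measure.integrable_pow_neg_integrablePower μ).const_mul (2 ^ N * C),
    Filter.mem_of_superset hs fun r hr x => ?_⟩
  have hdecay : (1 + ‖x‖) ^ N * ‖u r x‖ ≤ 2 ^ N * C := by
    have h := SchwartzMap.one_add_le_sup_seminorm_apply (𝕜 := ℝ) (m := (N, 0)) le_rfl le_rfl (u r) x
    rw [norm_iteratedFDeriv_zero] at h
    exact h.trans (by gcongr; exact (hC r hr).le)
  rw [Real.rpow_neg (by positivity), Real.rpow_natCast, ← div_eq_mul_inv,
    le_div_iff₀' (by positivity)]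
  exact hdecay

end LocallyBounded

section TimeDerivative

variable {E F G H : Type*} [NormedAddCommGroup E] [NormedSpace ℝ E]
  [NormedAddCommGroup F] [NormedSpace ℝ F] [NormedAddCommGroup G] [NormedSpace ℝ G]
  [NormedAddCommGroup H] [NormedSpace ℝ H]

theorem hasDerivAt_fderiv_of_contDiff {u : ℝ → E → F}
    (hu : ContDiff ℝ 2 (fun p : ℝ × E => u p.1 p.2)) (t : ℝ) (x : E) :
    HasDerivAt (fun s => fderiv ℝ (u s) x) (fderiv ℝ (fun y => deriv (fun s => u s y) t) x) t := by
  set Φ : ℝ × E → F := fun p => u p.1 p.2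
  have hΦ (p : ℝ × E) : HasFDerivAt Φ (fderiv ℝ Φ p) p :=
    (hu.differentiable two_ne_zero p).hasFDerivAt
  have hΦ' : HasFDerivAt (fderiv ℝ Φ) (fderiv ℝ (fderiv ℝ Φ) (t, x)) (t, x) :=
    ((hu.fderiv_right (m := 1) le_rfl).differentiable one_ne_zero _).hasFDerivAt
  have hspace : (fun s => fderiv ℝ (u s) x) =
      fun s => fderiv ℝ Φ (s, x) ∘L .inr ℝ ℝ E := by
    ext1 s
    exact ((hΦ (s, x)).comp x (hasFDerivAt_prodMk_right s x)).fderiv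
  have htime : (fun y => deriv (fun s => u s y) t) = fun y => fderiv ℝ Φ (t, y) (1, 0) := by
    ext1 y
    exact ((hΦ (t, y)).comp_hasDerivAt t ((hasDerivAt_id t).prodMk (hasDerivAt_const t y))).deriv
  have hmixed : fderiv ℝ (fun y => fderiv ℝ Φ (t, y) (1, 0)) x =
      fderiv ℝ (fderiv ℝ Φ) (t, x) (1, 0) ∘L .inr ℝ ℝ E := by
    refine ((hΦ'.comp x (hasFDerivAt_prodMk_right t x)).clm_apply
      (hasFDerivAt_const (1, 0) x)).fderiv.trans ?_
    ext v
    simpa using hu.contDiffAt.isSymmSndFDerivAt (by simp) (0, v) (1, 0)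
  have hpath : HasDerivAt (fun s => fderiv ℝ Φ (s, x)) (fderiv ℝ (fderiv ℝ Φ) (t, x) (1, 0)) t :=
    hΦ'.comp_hasDerivAt t ((hasDerivAt_id t).prodMk (hasDerivAt_const t x))
  rw [hspace, htime, hmixed]
  exact ((ContinuousLinearMap.compL ℝ E (ℝ × E) F).flip (.inr ℝ ℝ E)).hasFDerivAt.comp_hasDerivAt
    t hpath

theorem hasDerivAt_dilationCLM {E : Type*} [NormedAddCommGroup E] [InnerProductSpace ℝ E]
    {u u' : ℝ → 𝓢(E, ℂ)} (hu : ContDiff ℝ 2 (fun p : ℝ × E => u p.1 p.2))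
    (hdu : ∀ t x, HasDerivAt (fun s => u s x) (u' t x) t) (t : ℝ) (x : E) :
    HasDerivAt (fun s => dilationCLM E (u s) x) (dilationCLM E (u' t) x) t := by
  have hu' : (fun y => deriv (fun s => u s y) t) = u' t := funext fun y => (hdu t y).deriv
  have hgrad := (hasDerivAt_fderiv_of_contDiff (u := fun s => u s) hu t x).clm_apply
    (hasDerivAt_const t x)
  simp only [hu', map_zero, add_zero] at hgrad
  exact (hgrad.add ((hdu t x).const_mul _)).const_mul (-I)

variable [MeasurableSpace E] [BorelSpace E] [SecondCountableTopology E]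

theorem hasDerivAt_integral_pairing {μ : Measure E} [μ.HasTemperateGrowth] (B : F →L[ℝ] G →L[ℝ] H)
    {u u' : ℝ → 𝓢(E, F)} {v v' : ℝ → 𝓢(E, G)} (hu : LocallyBounded u) (hu' : LocallyBounded u')
    (hv : LocallyBounded v) (hv' : LocallyBounded v')
    (hdu : ∀ t x, HasDerivAt (fun s => u s x) (u' t x) t)
    (hdv : ∀ t x, HasDerivAt (fun s => v s x) (v' t x) t) (t : ℝ) :
    HasDerivAt (fun s => ∫ x, B (u s x) (v s x) ∂μ)
      (∫ x, B (u t x) (v' t x) ∂μ + ∫ x, B (u' t x) (v t x) ∂μ) t := by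
  obtain ⟨C, hC⟩ := hu.exists_eventually_norm_le t
  obtain ⟨C', hC'⟩ := hu'.exists_eventually_norm_le t
  obtain ⟨g, hg, hvg⟩ := hv.exists_integrable_eventually_norm_le μ t
  obtain ⟨g', hg', hvg'⟩ := hv'.exists_integrable_eventually_norm_le μ t
  have hint (f : 𝓢(E, F)) (h : 𝓢(E, G)) : Integrable (fun x => B (f x) (h x)) μ :=
    (SchwartzMap.pairing B f h).integrable
  rw [← integral_add (hint _ _) (hint _ _)]
  refine (hasDerivAt_integral_of_dominated_loc_of_deriv_le
    (F' := fun s x => B (u s x) (v' s x) + B (u' s x) (v s x))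
    (bound := fun x => ‖B‖ * C * g' x + ‖B‖ * C' * g x)
    ((hC.and hC').and (hvg.and hvg')) (.of_forall fun s => (hint _ _).aestronglyMeasurable)
    (hint _ _) ((hint _ _).add (hint _ _)).aestronglyMeasurable
    (.of_forall fun x s hs => ?_) ((hg'.const_mul _).add (hg.const_mul _))
    (.of_forall fun x s _ => B.hasDerivAt_of_bilinear (fun _ => hdu s x) (fun _ => hdv s x))).2
  obtain ⟨⟨hus, hus'⟩, hvs, hvs'⟩ := hs
  have hC₀ : 0 ≤ C := (norm_nonneg _).trans (hus x)
  have hC₀' : 0 ≤ C' := (norm_nonneg _).trans (hus' x)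
  calc ‖B (u s x) (v' s x) + B (u' s x) (v s x)‖
      ≤ ‖B‖ * ‖u s x‖ * ‖v' s x‖ + ‖B‖ * ‖u' s x‖ * ‖v s x‖ :=
        norm_add_le_of_le (B.le_opNorm₂ _ _) (B.le_opNorm₂ _ _)
    _ ≤ ‖B‖ * C * g' x + ‖B‖ * C' * g x := by
        gcongr
        exacts [hus x, hvs' x, hus' x, hvs x]

end TimeDerivative

section Heisenberg

variable {E : Type*} [NormedAddCommGroup E] [InnerProductSpace ℝ E] [FiniteDimensional ℝ E]
  [MeasurableSpace E] [BorelSpace E]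

/-- The inclusion of Schwartz functions into `L²`. -/
def toL2 : 𝓢(E, ℂ) →L[ℂ] Lp ℂ 2 (volume : Measure E) :=
  SchwartzMap.toLpCLM ℂ ℂ 2 volume

theorem inner_toL2 (f g : 𝓢(E, ℂ)) :
    inner ℂ (toL2 f) (toL2 g) = ∫ x, (starRingEnd ℂ) (f x) * g x := by
  simp only [toL2, SchwartzMap.toLpCLM_apply, SchwartzMap.inner_toL2_toL2_eq, RCLike.inner_apply']

theorem inner_toL2_self (f : 𝓢(E, ℂ)) :
    inner ℂ (toL2 f) (toL2 f) = ((∫ x, ‖f x‖ ^ 2 : ℝ) : ℂ) := by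
  simp only [inner_toL2, ← integral_complex_ofReal, conj_mul', ofReal_pow]

/-- `(z, w) ↦ conj z * w` as a real-bilinear map, the integrand of the `L²` inner product. -/
def conjMulCLM : ℂ →L[ℝ] ℂ →L[ℝ] ℂ :=
  ContinuousLinearMap.mul ℝ ℂ ∘L (conjCLE : ℂ →L[ℝ] ℂ)

theorem inner_toL2_lineDerivOp_right (f g : 𝓢(E, ℂ)) (v : E) :
    inner ℂ (toL2 f) (toL2 (∂_{v} g)) = -inner ℂ (toL2 (∂_{v} f)) (toL2 g) := by
  simp only [inner_toL2]
  exact SchwartzMap.integral_bilinear_lineDerivOp_right_eq_neg_left f g conjMulCLM v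

theorem inner_toL2_laplacian_right {ι : Type*} [Fintype ι] (b : OrthonormalBasis ι ℝ E)
    (f g : 𝓢(E, ℂ)) : inner ℂ (toL2 f) (toL2 (Δ g)) =
      -∑ i, inner ℂ (toL2 (∂_{b i} f)) (toL2 (∂_{b i} g)) := by
  simp only [SchwartzMap.laplacian_eq_sum b, map_sum, inner_sum, inner_toL2_lineDerivOp_right,
    Finset.sum_neg_distrib]

theorem inner_toL2_schrodingerCLM_left {V : E → ℝ} (hV : V.HasTemperateGrowth) (f g : 𝓢(E, ℂ)) :
    inner ℂ (toL2 (schrodingerCLM V f)) (toL2 g) =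
      inner ℂ (toL2 f) (toL2 (schrodingerCLM V g)) := by
  have hΔ : inner ℂ (toL2 (Δ f)) (toL2 g) = inner ℂ (toL2 f) (toL2 (Δ g)) := by
    simp only [inner_toL2]
    exact (SchwartzMap.integral_bilinear_laplacian_right_eq_left f g conjMulCLM).symm
  have hM : inner ℂ (toL2 (SchwartzMap.smulLeftCLM ℂ (fun x => (V x : ℂ)) f)) (toL2 g) =
      inner ℂ (toL2 f) (toL2 (SchwartzMap.smulLeftCLM ℂ (fun x => (V x : ℂ)) g)) := by
    simp only [inner_toL2, SchwartzMap.smulLeftCLM_apply_apply (hasTemperateGrowth_ofReal_comp hV),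
      smul_eq_mul, map_mul, conj_ofReal, mul_assoc, mul_left_comm]
  simp [schrodingerCLM, inner_add_left, inner_add_right, inner_neg_left, inner_neg_right, hΔ, hM]

theorem inner_toL2_lie_schrodingerCLM_dilationCLM {ι : Type*} [Fintype ι]
    (b : OrthonormalBasis ι ℝ E) {V : E → ℝ} (hV : V.HasTemperateGrowth) (f : 𝓢(E, ℂ)) :
    inner ℂ (toL2 f) (toL2 ((I • ⁅schrodingerCLM V, dilationCLM E⁆) f)) =
      ((2 * (∑ i, ∫ x, ‖fderiv ℝ f x (b i)‖ ^ 2) - ∫ x, fderiv ℝ V x x * ‖f x‖ ^ 2 : ℝ) : ℂ) := by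
  have hΔ : inner ℂ (toL2 f) (toL2 (Δ f)) = ((-∑ i, ∫ x, ‖fderiv ℝ f x (b i)‖ ^ 2 : ℝ) : ℂ) := by
    simp only [inner_toL2_laplacian_right b, inner_toL2_self, ofReal_neg, ofReal_sum,
      SchwartzMap.lineDerivOp_apply_eq_fderiv]
  have hM : inner ℂ (toL2 f)
      (toL2 (SchwartzMap.smulLeftCLM ℂ (fun x => ((fderiv ℝ V x x : ℝ) : ℂ)) f)) =
        ((∫ x, fderiv ℝ V x x * ‖f x‖ ^ 2 : ℝ) : ℂ) := by
    have hg := hasTemperateGrowth_ofReal_comp (hasTemperateGrowth_fderiv_apply_self hV)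
    simp only [inner_toL2, ← integral_complex_ofReal, SchwartzMap.smulLeftCLM_apply_apply hg,
      smul_eq_mul, mul_left_comm, conj_mul', ofReal_mul, ofReal_pow]
  rw [lie_schrodingerCLM_dilationCLM hV]
  simp [inner_sub_right, inner_smul_right, hΔ, hM]

theorem hasDerivAt_inner_toL2_of_symmetric {H A : 𝓢(E, ℂ) →L[ℂ] 𝓢(E, ℂ)}
    (hH : ∀ f g, inner ℂ (toL2 (H f)) (toL2 g) = inner ℂ (toL2 f) (toL2 (H g)))
    {u : ℝ → 𝓢(E, ℂ)} (hu : LocallyBounded u)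
    (hdu : ∀ t x, HasDerivAt (fun s => u s x) ((-I • H (u t)) x) t)
    (hdAu : ∀ t x, HasDerivAt (fun s => A (u s) x) (A (-I • H (u t)) x) t) (t : ℝ) :
    HasDerivAt (fun s => inner ℂ (toL2 (u s)) (toL2 (A (u s))))
      (inner ℂ (toL2 (u t)) (toL2 ((I • ⁅H, A⁆) (u t)))) t := by
  have hu' : LocallyBounded fun s => -I • H (u s) := hu.map ((-I • H).restrictScalars ℝ)
  have h := hasDerivAt_integral_pairing (μ := volume) conjMulCLM hu hu'
    (hu.map (A.restrictScalars ℝ)) (hu'.map (A.restrictScalars ℝ)) hdu hdAu t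
  have hi : inner ℂ (toL2 (u t)) (toL2 (A (-I • H (u t)))) +
      inner ℂ (toL2 (-I • H (u t))) (toL2 (A (u t))) =
      inner ℂ (toL2 (u t)) (toL2 ((I • ⁅H, A⁆) (u t))) := by
    simp only [Ring.lie_def, smul_apply, sub_apply, mul_apply_eq_comp, neg_smul, map_neg, map_smul,
      map_sub, inner_neg_left, inner_neg_right, inner_smul_left, inner_smul_right, inner_sub_right,
      hH, conj_I]
    ring
  simp only [inner_toL2] at hi ⊢
  exact h.congr_deriv hi

end Heisenberg

section Coordinates

theorem apply_eq_sum_smul_apply_single {ι F : Type*} [Fintype ι] [DecidableEq ι]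
    [NormedAddCommGroup F] [NormedSpace ℝ F] (L : EuclideanSpace ℝ ι →L[ℝ] F)
    (x : EuclideanSpace ℝ ι) : L x = ∑ i, x i • L (EuclideanSpace.single i 1) := by
  conv_lhs => rw [← (EuclideanSpace.basisFun ι ℝ).sum_repr x]
  simp only [map_sum, map_smul, EuclideanSpace.basisFun_repr, EuclideanSpace.basisFun_apply]

variable {n : ℕ}

theorem fderiv_apply_self_eq_xdotGrad (V : EuclideanSpace ℝ (Fin n) → ℝ)
    (x : EuclideanSpace ℝ (Fin n)) : fderiv ℝ V x x = xdotGrad V x :=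
  apply_eq_sum_smul_apply_single (fderiv ℝ V x) x

theorem lap_eq_laplacian (f : 𝓢(EuclideanSpace ℝ (Fin n), ℂ)) (x : EuclideanSpace ℝ (Fin n)) :
    lap f x = Δ f x := by
  rw [SchwartzMap.laplacian_eq_sum (EuclideanSpace.basisFun (Fin n) ℝ), sum_apply]
  simp only [EuclideanSpace.basisFun_apply]
  rfl

theorem dilationCLM_apply (f : 𝓢(EuclideanSpace ℝ (Fin n), ℂ)) (x : EuclideanSpace ℝ (Fin n)) :
    dilationCLM _ f x = -I * ((∑ i, (x i : ℂ) * pd f i x) + (n / 2 : ℂ) * f x) := by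
  have hEuler : fderiv ℝ f x x = ∑ i, (x i : ℂ) * pd f i x :=
    apply_eq_sum_smul_apply_single (fderiv ℝ f x) x
  rw [← hEuler]
  simp [dilationCLM, mul_add]

theorem schrodingerCLM_apply {V : EuclideanSpace ℝ (Fin n) → ℝ} (hV : V.HasTemperateGrowth)
    (f : 𝓢(EuclideanSpace ℝ (Fin n), ℂ)) (x : EuclideanSpace ℝ (Fin n)) :
    schrodingerCLM V f x = -lap f x + (V x : ℂ) * f x := by
  simp [schrodingerCLM, lap_eq_laplacian,
    SchwartzMap.smulLeftCLM_apply_apply (hasTemperateGrowth_ofReal_comp hV)]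

theorem sum_integral_norm_fderiv_sq (f : 𝓢(EuclideanSpace ℝ (Fin n), ℂ)) :
    ∑ i, ∫ x, ‖fderiv ℝ f x (EuclideanSpace.basisFun (Fin n) ℝ i)‖ ^ 2 =
      ∫ x, gradNormSq f x := by
  have hint (i) :
      Integrable (fun x => ‖fderiv ℝ f x (EuclideanSpace.basisFun (Fin n) ℝ i)‖ ^ 2) :=
    ((∂_{EuclideanSpace.basisFun (Fin n) ℝ i} f).memLp 2 volume).integrable_norm_pow two_ne_zero
  rw [← integral_finsetSum _ fun i _ => hint i]
  simp only [EuclideanSpace.basisFun_apply]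
  rfl

variable {ψ : ℝ → EuclideanSpace ℝ (Fin n) → ℂ}
  (hψ : ContDiff ℝ (⊤ : ℕ∞) (fun p : ℝ × EuclideanSpace ℝ (Fin n) => ψ p.1 p.2))
  (hS : LocUnifSchwartz ψ)

/-- The time slice `ψ(t,·)` as a Schwartz function. -/
def schwartzSlice (t : ℝ) : 𝓢(EuclideanSpace ℝ (Fin n), ℂ) where
  toFun := ψ t
  smooth' := hψ.comp (contDiff_prodMk_right t)
  decay' k m := (hS k m |t|).imp fun _ hC => hC t (abs_le.1 le_rfl)

theorem locallyBounded_schwartzSlice : LocallyBounded (schwartzSlice hψ hS) := fun t => by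
  refine ⟨Set.Icc (-(|t| + 1)) (|t| + 1), Icc_mem_nhds (by linarith [neg_abs_le t])
    (by linarith [le_abs_self t]),
    ((schwartz_withSeminorms ℝ _ ℂ).image_isVonNBounded_iff_seminorm_bounded _).2 fun i => ?_⟩
  obtain ⟨C, hC⟩ := hS i.1 i.2 (|t| + 1)
  refine ⟨max C 0 + 1, by positivity, fun s hs => lt_add_of_le_of_pos ?_ one_pos⟩
  exact SchwartzMap.seminorm_le_bound ℝ _ _ _ (le_max_right _ _)
    fun x => (hC s hs x).trans (le_max_left _ _)

theorem hasDerivAt_schwartzSlice {V : EuclideanSpace ℝ (Fin n) → ℝ} (hV : V.HasTemperateGrowth)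
    (heq : ∀ t x, I * tderiv ψ t x = -lap (ψ t) x + (V x : ℂ) * ψ t x) (t : ℝ)
    (x : EuclideanSpace ℝ (Fin n)) :
    HasDerivAt (fun s => schwartzSlice hψ hS s x)
      ((-I • schrodingerCLM V (schwartzSlice hψ hS t)) x) t := by
  have hψx : DifferentiableAt ℝ (fun s => ψ s x) t :=
    (hψ.comp (contDiff_prodMk_left x)).differentiable (by simp) t
  refine hψx.hasDerivAt.congr_deriv ?_
  calc tderiv ψ t x = -I * (I * tderiv ψ t x) := by linear_combination tderiv ψ t x * I_sq
    _ = -I * schrodingerCLM V (schwartzSlice hψ hS t) x := by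
      rw [heq, schrodingerCLM_apply hV]
      rfl

end Coordinates

theorem dilation_identity_general {n : ℕ} (V : EuclideanSpace ℝ (Fin n) → ℝ)
    (hV : V.HasTemperateGrowth)
    (ψ : ℝ → EuclideanSpace ℝ (Fin n) → ℂ)
    (hψ : ContDiff ℝ (⊤ : ℕ∞) (fun p : ℝ × EuclideanSpace ℝ (Fin n) => ψ p.1 p.2))
    (hS : LocUnifSchwartz ψ)
    (heq : ∀ t x, Complex.I * tderiv ψ t x = -lap (ψ t) x + (V x : ℂ) * ψ t x)
    (a : ℝ → ℝ)
    (ha : ∀ t, a t = (∫ x : EuclideanSpace ℝ (Fin n),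
      (starRingEnd ℂ) (ψ t x) *
        (-Complex.I * ((∑ i, (x i : ℂ) * pd (ψ t) i x) + (n / 2 : ℂ) * ψ t x))).re) :
    ∀ t : ℝ, HasDerivAt a
      (2 * (∫ x : EuclideanSpace ℝ (Fin n), gradNormSq (ψ t) x)
        - ∫ x : EuclideanSpace ℝ (Fin n), xdotGrad V x * ‖ψ t x‖ ^ 2) t := by
  intro t
  set u := schwartzSlice hψ hS
  have ha_inner : a = fun s => (inner ℂ (toL2 (u s)) (toL2 (dilationCLM _ (u s)))).re := by
    ext s
    simp only [ha, inner_toL2, dilationCLM_apply]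
    rfl
  have hdu := hasDerivAt_schwartzSlice hψ hS hV heq
  have hdAu := hasDerivAt_dilationCLM (u := u) (hψ.of_le (by norm_cast)) hdu
  have hHeisenberg := hasDerivAt_inner_toL2_of_symmetric (inner_toL2_schrodingerCLM_left hV)
    (locallyBounded_schwartzSlice hψ hS) hdu hdAu t
  rw [inner_toL2_lie_schrodingerCLM_dilationCLM (EuclideanSpace.basisFun _ ℝ) hV,
    sum_integral_norm_fderiv_sq] at hHeisenberg
  simp only [fderiv_apply_self_eq_xdotGrad] at hHeisenberg
  rw [ha_inner]
  exact reCLM.hasFDerivAt.comp_hasDerivAt t hHeisenberg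

/-- The dilation (virial) identity: for a solution of `i∂ₜψ = −Δψ + Vψ`,
the expectation `a(t) = Re⟨ψ(t), Aψ(t)⟩` of the dilation operator
`A = (1/2)(x·p + p·x)` satisfies
`a'(t) = 2∫‖∇ψ‖² − ∫ (x·∇V)|ψ|²`, i.e. `i[H,A] = −2Δ − x·∇V`. -/
theorem dilation_identity {n : ℕ} (hn : 1 ≤ n)
    (V : EuclideanSpace ℝ (Fin n) → ℝ)
    (hV : ContDiff ℝ (⊤ : ℕ∞) V)
    (hVbd : ∀ m : ℕ, ∃ C : ℝ, ∀ x, ‖iteratedFDeriv ℝ m V x‖ ≤ C)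
    (ψ : ℝ → EuclideanSpace ℝ (Fin n) → ℂ)
    (hψ : ContDiff ℝ (⊤ : ℕ∞) (fun p : ℝ × EuclideanSpace ℝ (Fin n) => ψ p.1 p.2))
    (hS : LocUnifSchwartz ψ)
    (hS' : LocUnifSchwartz (fun t => tderiv ψ t))
    (heq : ∀ t x, Complex.I * tderiv ψ t x = -lap (ψ t) x + (V x : ℂ) * ψ t x)
    (a : ℝ → ℝ)
    (ha : ∀ t, a t = (∫ x : EuclideanSpace ℝ (Fin n),
      (starRingEnd ℂ) (ψ t x) *
        (-Complex.I * ((∑ i, (x i : ℂ) * pd (ψ t) i x) + (n / 2 : ℂ) * ψ t x))).re) :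
    ∀ t : ℝ, HasDerivAt a
      (2 * (∫ x : EuclideanSpace ℝ (Fin n), gradNormSq (ψ t) x)
        - ∫ x : EuclideanSpace ℝ (Fin n), xdotGrad V x * ‖ψ t x‖ ^ 2) t :=
  dilation_identity_general V ⟨hV, fun m => ⟨0, by simpa using hVbd m⟩⟩ ψ hψ hS heq a ha

end
end

section
/- Let n ≥ 1, let V : ℝⁿ → ℝ and W : ℝ × ℝⁿ → ℝ be smooth with V, W and all their derivatives bounded, and let ψ : ℝ × ℝⁿ → ℂ be smooth such that for each t the functions ψ(t,·) and ∂ₜψ(t,·) are Schwartz, with Schwartz seminorms locally bounded in t, and ψ satisfies i∂ₜψ(t,x) = −Δψ(t,x) + V(x)ψ(t,x) + W(t,x)ψ(t,x) on ℝ × ℝⁿ. Then the function t ↦ ‖(x−2pt)ψ(t)‖² + 4t² ∫_{ℝⁿ}(V(x)+W(t,x))|ψ(t,x)|² dx is differentiable on ℝ with derivative equal to 4t ∫_{ℝⁿ} ( x·∇V(x) + x·∇ₓW(t,x) + 2V(x) + 2W(t,x) ) |ψ(t,x)|² dx + 4t² ∫_{ℝⁿ} ∂ₜW(t,x) |ψ(t,x)|²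 dx. -/
open MeasureTheory Complex

noncomputable section

/-!
Put `U = V + W`. The operators `Jᵢ = xᵢ + 2it∂ᵢ` commute with `i∂ₜ + Δ`, so `Jᵢψ` solves the same
Schrödinger equation as `ψ` with the additional source `2it(∂ᵢU)ψ`. For a solution `φ` with
source `G` and a real weight `b`, differentiating under the integral and integrating by parts gives

  `d/dt ∫ b|φ|² = ∫ ∂ₜb|φ|² + 2 ∫ ∇b · Im(φ̄∇φ) + 2 ∫ b Im(φ̄G)`.

With `b = 1` and `φ = Jᵢψ`, summed over `i`, this is
`d/dt ‖(x − 2pt)ψ‖² = 4t ∫ (x·∇U)|ψ|² − 8t² ∫ ∇U · Im(ψ̄∇ψ)`; with `b = U` and `φ = ψ` it is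
`d/dt ∫ U|ψ|² = ∫ ∂ₜU|ψ|² + 2 ∫ ∇U · Im(ψ̄∇ψ)`. In the derivative of
`‖(x − 2pt)ψ‖² + 4t² ∫ U|ψ|²` the two current integrals cancel.
-/

section Growth

open Filter Topology Asymptotics ComplexConjugate

variable {E F G : Type*} [NormedAddCommGroup E] [NormedAddCommGroup F] [NormedAddCommGroup G]

/-- Time-dependent functions of moderate growth: continuous in space, and polynomially bounded in
space uniformly for times near any given `t`; the exponent may depend on `t`. -/
structure ModerateGrowth (b : ℝ → E → F) : Prop where
  continuous (t : ℝ) : Continuous (b t)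
  isBigO (t : ℝ) : ∃ k : ℕ, (fun p : ℝ × E ↦ b p.1 p.2) =O[𝓝 t ×ˢ ⊤] fun p ↦ (1 + ‖p.2‖) ^ k

/-- Time-dependent functions of rapid decay: continuous in space, and decaying faster than any
power of `1 + ‖x‖`, uniformly for times near any given `t`. -/
structure RapidDecay (f : ℝ → E → F) : Prop where
  continuous (t : ℝ) : Continuous (f t)
  isBigO (t : ℝ) (k : ℕ) :
    (fun p : ℝ × E ↦ f p.1 p.2) =O[𝓝 t ×ˢ ⊤] fun p ↦ ((1 + ‖p.2‖) ^ k)⁻¹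

namespace ModerateGrowth

theorem of_continuous_time {c : ℝ → F} (hc : Continuous c) :
    ModerateGrowth fun t (_ : E) ↦ c t where
  continuous _ := continuous_const
  isBigO t := ⟨0, by
    simpa only [pow_zero, Function.comp_def] using
      ((hc.tendsto t).isBigO_one ℝ).comp_tendsto tendsto_fst⟩

theorem const (c : F) : ModerateGrowth fun _ (_ : E) ↦ c :=
  of_continuous_time continuous_const

theorem of_norm_le {b : ℝ → E → F} (hb : ∀ t, Continuous (b t)) {C : ℝ}
    (hC : ∀ t x, ‖b t x‖ ≤ C) : ModerateGrowth b where
  continuous := hb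
  isBigO _ := ⟨0, .of_bound C (.of_forall fun p ↦ by simpa using hC p.1 p.2)⟩

theorem add {b c : ℝ → E → F} (hb : ModerateGrowth b) (hc : ModerateGrowth c) :
    ModerateGrowth fun t x ↦ b t x + c t x where
  continuous t := (hb.continuous t).add (hc.continuous t)
  isBigO t := by
    obtain ⟨k, hk⟩ := hb.isBigO t
    obtain ⟨l, hl⟩ := hc.isBigO t
    have hmono {m : ℕ} (hm : m ≤ k + l) : (fun p : ℝ × E ↦ (1 + ‖p.2‖) ^ m) =O[𝓝 t ×ˢ ⊤]
        fun p ↦ (1 + ‖p.2‖) ^ (k + l) :=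
      isBigO_of_le _ fun p ↦ by
        rw [Real.norm_of_nonneg (by positivity), Real.norm_of_nonneg (by positivity)]
        exact pow_le_pow_right₀ (le_add_of_nonneg_right (norm_nonneg _)) hm
    exact ⟨k + l, (hk.trans (hmono le_self_add)).add (hl.trans (hmono le_add_self))⟩

theorem clm_apply [NormedSpace ℝ F] [NormedSpace ℝ G] {L : ℝ → E → F →L[ℝ] G}
    (hL : ModerateGrowth L) (v : F) : ModerateGrowth fun t x ↦ L t x v where
  continuous t := (hL.continuous t).clm_apply continuous_const
  isBigO t := (hL.isBigO t).imp fun _ h ↦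
    (IsBigO.of_bound ‖v‖ (.of_forall fun p ↦ by
      simpa [mul_comm] using (L p.1 p.2).le_opNorm v)).trans h

theorem smul_rapidDecay {𝕜 : Type*} [NormedField 𝕜] [NormedSpace 𝕜 F] {b : ℝ → E → 𝕜}
    {f : ℝ → E → F} (hb : ModerateGrowth b) (hf : RapidDecay f) :
    RapidDecay fun t x ↦ b t x • f t x where
  continuous t := (hb.continuous t).smul (hf.continuous t)
  isBigO t k := by
    obtain ⟨l, hl⟩ := hb.isBigO t
    have hprod := (hl.norm_left.mul (hf.isBigO t (k + l)).norm_left)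
    refine ((isBigO_of_le _ fun p ↦ ?_).trans hprod).congr_right fun p ↦ ?_
    · simp [norm_smul]
    · field_simp
      ring

theorem mul_rapidDecay {𝕜 : Type*} [NormedField 𝕜] {b f : ℝ → E → 𝕜} (hb : ModerateGrowth b)
    (hf : RapidDecay f) : RapidDecay fun t x ↦ b t x * f t x :=
  hb.smul_rapidDecay hf

end ModerateGrowth

namespace RapidDecay

theorem moderateGrowth {f : ℝ → E → F} (hf : RapidDecay f) : ModerateGrowth f where
  continuous := hf.continuous
  isBigO t := ⟨0, by simpa only [pow_zero, inv_one] using hf.isBigO t 0⟩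

theorem of_norm_le {f : ℝ → E → F} {g : ℝ → E → G} (hf : RapidDecay f)
    (hg : ∀ t, Continuous (g t)) (hle : ∀ t x, ‖g t x‖ ≤ ‖f t x‖) : RapidDecay g where
  continuous := hg
  isBigO t k := (isBigO_of_le _ fun p : ℝ × E ↦ hle p.1 p.2).trans (hf.isBigO t k)

theorem zero : RapidDecay fun _ (_ : E) ↦ (0 : F) where
  continuous _ := continuous_const
  isBigO _ _ := isBigO_zero _ _

theorem add {f g : ℝ → E → F} (hf : RapidDecay f) (hg : RapidDecay g) :
    RapidDecay fun t x ↦ f t x + g t x where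
  continuous t := (hf.continuous t).add (hg.continuous t)
  isBigO t k := (hf.isBigO t k).add (hg.isBigO t k)

theorem sub {f g : ℝ → E → F} (hf : RapidDecay f) (hg : RapidDecay g) :
    RapidDecay fun t x ↦ f t x - g t x where
  continuous t := (hf.continuous t).sub (hg.continuous t)
  isBigO t k := (hf.isBigO t k).sub (hg.isBigO t k)

theorem sum {ι : Type*} {s : Finset ι} {f : ι → ℝ → E → F} (hf : ∀ i ∈ s, RapidDecay (f i)) :
    RapidDecay fun t x ↦ ∑ i ∈ s, f i t x where
  continuous t := continuous_finsetSum s fun i hi ↦ (hf i hi).continuous t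
  isBigO t k := IsBigO.fun_sum fun i hi ↦ (hf i hi).isBigO t k

theorem norm_sq {f : ℝ → E → F} (hf : RapidDecay f) : RapidDecay fun t x ↦ ‖f t x‖ ^ 2 := by
  have hnorm : RapidDecay fun t x ↦ ‖f t x‖ :=
    hf.of_norm_le (fun t ↦ (hf.continuous t).norm) fun t x ↦ (norm_norm _).le
  simpa only [sq] using hnorm.moderateGrowth.mul_rapidDecay hnorm

theorem im_conj_mul {f g : ℝ → E → ℂ} (hf : RapidDecay f) (hg : RapidDecay g) :
    RapidDecay fun t x ↦ (conj (f t x) * g t x).im :=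
  (hf.moderateGrowth.mul_rapidDecay hg).of_norm_le
    (fun t ↦ by have := hf.continuous t; have := hg.continuous t; fun_prop)
    fun t x ↦ (abs_im_le_norm _).trans (by simp)

variable [NormedSpace ℝ E] [FiniteDimensional ℝ E] [MeasurableSpace E] [BorelSpace E]
  {μ : Measure E} [μ.IsAddHaarMeasure]

theorem exists_integrable_bound {f : ℝ → E → F} (hf : RapidDecay f) (t : ℝ) :
    ∃ B : E → ℝ, Integrable B μ ∧ ∀ᶠ s in 𝓝 t, ∀ x, ‖f s x‖ ≤ B x := by
  obtain ⟨C, hC⟩ := (hf.isBigO t (Module.finrank ℝ E + 1)).bound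
  refine ⟨fun x ↦ C * (1 + ‖x‖) ^ (-(Module.finrank ℝ E + 1 : ℕ) : ℝ),
    (integrable_one_add_norm (by simp)).const_mul C, ?_⟩
  filter_upwards [mem_prod_top.1 hC] with s hs x
  refine (hs x).trans_eq ?_
  rw [Real.rpow_neg (by positivity), Real.rpow_natCast, Real.norm_of_nonneg (by positivity)]

theorem integrable {f : ℝ → E → F} (hf : RapidDecay f) (t : ℝ) : Integrable (f t) μ := by
  obtain ⟨B, hB, hle⟩ := hf.exists_integrable_bound (μ := μ) t
  exact hB.mono' (hf.continuous t).aestronglyMeasurable (.of_forall hle.self_of_nhds)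

theorem hasDerivAt_integral [NormedSpace ℝ F] {f f' : ℝ → E → F} (hf : RapidDecay f)
    (hf' : RapidDecay f') (hderiv : ∀ t x, HasDerivAt (fun s ↦ f s x) (f' t x) t) (t : ℝ) :
    HasDerivAt (fun s ↦ ∫ x, f s x ∂μ) (∫ x, f' t x ∂μ) t := by
  obtain ⟨B, hB, hle⟩ := hf'.exists_integrable_bound (μ := μ) t
  exact (hasDerivAt_integral_of_dominated_loc_of_deriv_le hle
    (.of_forall fun s ↦ (hf.continuous s).aestronglyMeasurable) (hf.integrable t)
    (hf'.continuous t).aestronglyMeasurable (.of_forall fun x s hs ↦ hs x) hB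
    (.of_forall fun x s _ ↦ hderiv s x)).2

end RapidDecay

end Growth

section SpaceTime

variable {E F : Type*} [NormedAddCommGroup E] [NormedSpace ℝ E]
  [NormedAddCommGroup F] [NormedSpace ℝ F]

theorem hasFDerivAt_space_slice {Ψ : ℝ → E → F} {t : ℝ} {x : E}
    (hΨ : DifferentiableAt ℝ (fun p : ℝ × E ↦ Ψ p.1 p.2) (t, x)) :
    HasFDerivAt (Ψ t)
      ((fderiv ℝ (fun p : ℝ × E ↦ Ψ p.1 p.2) (t, x)).comp (.inr ℝ ℝ E)) x :=
  hΨ.hasFDerivAt.comp x (hasFDerivAt_prodMk_right t x)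

theorem hasDerivAt_time_slice {Ψ : ℝ → E → F} {t : ℝ} {x : E}
    (hΨ : DifferentiableAt ℝ (fun p : ℝ × E ↦ Ψ p.1 p.2) (t, x)) :
    HasDerivAt (fun s ↦ Ψ s x) (fderiv ℝ (fun p : ℝ × E ↦ Ψ p.1 p.2) (t, x) (1, 0)) t := by
  simpa [Function.comp_def] using
    (hΨ.hasFDerivAt.comp t (hasFDerivAt_prodMk_left t x)).hasDerivAt

theorem hasDerivAt_fderiv_space_slice {Ψ : ℝ → E → F}
    (hΨ : ContDiff ℝ 2 fun p : ℝ × E ↦ Ψ p.1 p.2) (t : ℝ) (x v : E) :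
    HasDerivAt (fun s ↦ fderiv ℝ (Ψ s) x v)
      (fderiv ℝ (fun y ↦ deriv (fun s ↦ Ψ s y) t) x v) t := by
  set D := fderiv ℝ fun p : ℝ × E ↦ Ψ p.1 p.2
  have hdiff (p : ℝ × E) : DifferentiableAt ℝ (fun p : ℝ × E ↦ Ψ p.1 p.2) p :=
    hΨ.differentiable (by simp) p
  have hD (p : ℝ × E) : DifferentiableAt ℝ (fun q : ℝ × E ↦ D (q.1, q.2)) p :=
    (hΨ.fderiv_right (m := 1) le_rfl).differentiable one_ne_zero p
  have hspace : (fun s ↦ fderiv ℝ (Ψ s) x v) = fun s ↦ D (s, x) (0, v) :=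
    funext fun s ↦ by simp [(hasFDerivAt_space_slice (hdiff (s, x))).fderiv, D]
  have htime : (fun y ↦ deriv (fun s ↦ Ψ s y) t) = fun y ↦ D (t, y) (1, 0) :=
    funext fun y ↦ (hasDerivAt_time_slice (hdiff (t, y))).deriv
  have hsymm : fderiv ℝ D (t, x) (1, 0) (0, v) = fderiv ℝ D (t, x) (0, v) (1, 0) :=
    hΨ.contDiffAt.isSymmSndFDerivAt (by simp) _ _
  have hmixed := (hasFDerivAt_space_slice (Ψ := fun s y ↦ D (s, y)) (hD (t, x))).clm_apply
    (hasFDerivAt_const ((1 : ℝ), (0 : E)) x)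
  rw [hspace, htime, hmixed.fderiv]
  simpa [hsymm] using (hasDerivAt_time_slice (Ψ := fun s y ↦ D (s, y)) (hD (t, x))).clm_apply
    (hasDerivAt_const t ((0 : ℝ), v))

/-- Real potentials (and weights) that are `C¹` in space-time and, together with their space-time
gradient, of moderate growth. -/
structure ModerateC1 (b : ℝ → E → ℝ) : Prop where
  contDiff : ContDiff ℝ 1 fun p : ℝ × E ↦ b p.1 p.2
  moderateGrowth : ModerateGrowth b
  fderiv_moderateGrowth : ModerateGrowth fun t x ↦ fderiv ℝ (fun p : ℝ × E ↦ b p.1 p.2) (t, x)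

namespace ModerateC1

theorem of_bounded {b : ℝ → E → ℝ} (hb : ContDiff ℝ 1 fun p : ℝ × E ↦ b p.1 p.2)
    (hbd : ∀ m ≤ 1, ∃ C, ∀ p, ‖iteratedFDeriv ℝ m (fun p : ℝ × E ↦ b p.1 p.2) p‖ ≤ C) :
    ModerateC1 b := by
  obtain ⟨C, hC⟩ := hbd 0 zero_le_one
  obtain ⟨C', hC'⟩ := hbd 1 le_rfl
  simp only [norm_iteratedFDeriv_zero] at hC
  simp only [norm_iteratedFDeriv_one] at hC'
  exact ⟨hb, .of_norm_le (fun t ↦ hb.continuous.comp (.prodMk_right t)) fun t x ↦ hC (t, x),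
    .of_norm_le (fun t ↦ (hb.continuous_fderiv one_ne_zero).comp (.prodMk_right t))
      fun t x ↦ hC' (t, x)⟩

theorem of_bounded_static {V : E → ℝ} (hV : ContDiff ℝ 1 V)
    (hbd : ∀ m ≤ 1, ∃ C, ∀ x, ‖iteratedFDeriv ℝ m V x‖ ≤ C) : ModerateC1 fun _ ↦ V := by
  refine of_bounded (hV.comp contDiff_snd) fun m hm ↦ (hbd m hm).imp fun C hC p ↦ ?_
  have hcomp := ContinuousLinearMap.iteratedFDeriv_comp_right (.snd ℝ ℝ E) hV p
    (by exact_mod_cast hm)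
  calc ‖iteratedFDeriv ℝ m (V ∘ ContinuousLinearMap.snd ℝ ℝ E) p‖
      ≤ ‖iteratedFDeriv ℝ m V p.2‖ * ∏ _ : Fin m, ‖ContinuousLinearMap.snd ℝ ℝ E‖ := by
        rw [hcomp]
        exact ContinuousMultilinearMap.norm_compContinuousLinearMap_le _ _
    _ ≤ ‖iteratedFDeriv ℝ m V p.2‖ := mul_le_of_le_one_right (norm_nonneg _) <|
        Finset.prod_le_one (fun _ _ ↦ norm_nonneg _) fun _ _ ↦
          ContinuousLinearMap.norm_snd_le ..
    _ ≤ C := hC p.2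

theorem add {b c : ℝ → E → ℝ} (hb : ModerateC1 b) (hc : ModerateC1 c) :
    ModerateC1 fun t x ↦ b t x + c t x where
  contDiff := hb.contDiff.add hc.contDiff
  moderateGrowth := hb.moderateGrowth.add hc.moderateGrowth
  fderiv_moderateGrowth := by
    simpa only [fderiv_fun_add (hb.contDiff.differentiable one_ne_zero _)
      (hc.contDiff.differentiable one_ne_zero _)] using
      hb.fderiv_moderateGrowth.add hc.fderiv_moderateGrowth

theorem const (c : ℝ) : ModerateC1 fun _ (_ : E) ↦ c where
  contDiff := contDiff_const
  moderateGrowth := .const c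
  fderiv_moderateGrowth := by simpa using ModerateGrowth.const (0 : ℝ × E →L[ℝ] ℝ)

variable {b : ℝ → E → ℝ} (hb : ModerateC1 b)
include hb

theorem differentiableAt (p : ℝ × E) : DifferentiableAt ℝ (fun p : ℝ × E ↦ b p.1 p.2) p :=
  hb.contDiff.differentiable one_ne_zero p

theorem differentiable_space (t : ℝ) : Differentiable ℝ (b t) :=
  fun x ↦ (hasFDerivAt_space_slice (hb.differentiableAt (t, x))).differentiableAt

theorem hasDerivAt_time (t : ℝ) (x : E) :
    HasDerivAt (fun s ↦ b s x) (deriv (fun s ↦ b s x) t) t :=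
  (hasDerivAt_time_slice (hb.differentiableAt (t, x))).differentiableAt.hasDerivAt

theorem fderiv_space (v : E) : ModerateGrowth fun t x ↦ fderiv ℝ (b t) x v := by
  simpa [(hasFDerivAt_space_slice (hb.differentiableAt _)).fderiv] using
    hb.fderiv_moderateGrowth.clm_apply (0, v)

theorem deriv_time : ModerateGrowth fun t x ↦ deriv (fun s ↦ b s x) t := by
  simpa [(hasDerivAt_time_slice (hb.differentiableAt _)).deriv] using
    hb.fderiv_moderateGrowth.clm_apply (1, 0)

end ModerateC1

end SpaceTime

section Balance

open ComplexConjugate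

variable {n : ℕ}

theorem contDiff_pd {m : WithTop ℕ∞} {f : EuclideanSpace ℝ (Fin n) → ℂ}
    (hf : ContDiff ℝ (m + 1) f) (i : Fin n) : ContDiff ℝ m (pd f i) :=
  (hf.fderiv_right le_rfl).clm_apply contDiff_const

/-- The `j`-th component of `Im(f̄ ∇f)`, which is half the probability current of `f` for the
Hamiltonian `−Δ`. -/
def halfCurrent (f : EuclideanSpace ℝ (Fin n) → ℂ) (j : Fin n)
    (x : EuclideanSpace ℝ (Fin n)) : ℝ :=
  (conj (f x) * pd f j x).im

theorem differentiable_halfCurrent {f : EuclideanSpace ℝ (Fin n) → ℂ} (hf : ContDiff ℝ 2 f)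
    (j : Fin n) : Differentiable ℝ (halfCurrent f j) :=
  imCLM.differentiable.comp <|
    (conjCLE.differentiable.comp (hf.differentiable two_ne_zero)).mul
      ((contDiff_pd (m := 1) hf j).differentiable one_ne_zero)

theorem fderiv_halfCurrent {f : EuclideanSpace ℝ (Fin n) → ℂ} (hf : ContDiff ℝ 2 f)
    (j : Fin n) (x : EuclideanSpace ℝ (Fin n)) :
    fderiv ℝ (halfCurrent f j) x (EuclideanSpace.single j 1) =
      (conj (f x) * pd (pd f j) j x).im := by
  have hconj := conjCLE.hasFDerivAt.comp x (hf.differentiable two_ne_zero x).hasFDerivAt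
  have hpd := ((contDiff_pd (m := 1) hf j).differentiable one_ne_zero x).hasFDerivAt
  rw [HasFDerivAt.fderiv (f := halfCurrent f j) (imCLM.hasFDerivAt.comp x (hconj.mul' hpd))]
  -- The term `∂ⱼf̄ ∂ⱼf` of the product rule is real.
  simp only [ContinuousAlgEquiv.coe_coeCLE, Function.comp_apply, conjCAE_apply, pd,
    op_smul_eq_smul, ContinuousLinearMap.comp_add, add_apply, ContinuousLinearMap.comp_apply,
    smul_apply, smul_eq_mul, imCLM_apply, mul_im, conj_re, conj_im,
    ContinuousLinearEquiv.coe_coe, ContinuousAlgEquiv.coeCLE_apply]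
  ring

/-- Classical solutions `φ` of the forced Schrödinger equation `i∂ₜφ = −Δφ + Uφ + G` which decay
rapidly together with those space derivatives that occur in the local conservation law of
`|φ|²`. -/
structure IsDecayingSolution (U : ℝ → EuclideanSpace ℝ (Fin n) → ℝ)
    (G φ : ℝ → EuclideanSpace ℝ (Fin n) → ℂ) : Prop where
  contDiff (t : ℝ) : ContDiff ℝ 2 (φ t)
  rapidDecay : RapidDecay φ
  rapidDecay_pd (j : Fin n) : RapidDecay fun t ↦ pd (φ t) j
  rapidDecay_pd_pd (j : Fin n) : RapidDecay fun t ↦ pd (pd (φ t) j) j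
  hasDerivAt (t : ℝ) (x : EuclideanSpace ℝ (Fin n)) :
    HasDerivAt (fun s ↦ φ s x) (-I * (-lap (φ t) x + U t x * φ t x + G t x)) t

namespace IsDecayingSolution

variable {U : ℝ → EuclideanSpace ℝ (Fin n) → ℝ}
  {G φ : ℝ → EuclideanSpace ℝ (Fin n) → ℂ} (hφ : IsDecayingSolution U G φ)
include hφ

theorem hasDerivAt_norm_sq (t : ℝ) (x : EuclideanSpace ℝ (Fin n)) :
    HasDerivAt (fun s ↦ ‖φ s x‖ ^ 2)
      (2 * (conj (φ t x) * G t x).im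
        - 2 * ∑ j, (conj (φ t x) * pd (pd (φ t) j) j x).im) t := by
  have hlap : ∑ j, (conj (φ t x) * pd (pd (φ t) j) j x).im = (conj (φ t x) * lap (φ t) x).im := by
    rw [lap, Finset.mul_sum, im_sum]
  rw [hlap]
  refine (hφ.hasDerivAt t x).norm_sq.congr_deriv ?_
  simp only [Complex.inner, mul_re, mul_im, add_re, add_im, neg_re, neg_im, I_re, I_im, conj_re,
    conj_im, ofReal_re, ofReal_im]
  ring

theorem rapidDecay_halfCurrent (j : Fin n) : RapidDecay fun t ↦ halfCurrent (φ t) j :=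
  hφ.rapidDecay.im_conj_mul (hφ.rapidDecay_pd j)

theorem rapidDecay_im_conj_mul_pd_pd (j : Fin n) :
    RapidDecay fun t x ↦ (conj (φ t x) * pd (pd (φ t) j) j x).im :=
  hφ.rapidDecay.im_conj_mul (hφ.rapidDecay_pd_pd j)

variable {b : ℝ → EuclideanSpace ℝ (Fin n) → ℝ} (hb : ModerateC1 b)
include hb

theorem integral_mul_im_conj_mul_pd_pd (j : Fin n) (t : ℝ) :
    ∫ x, b t x * (conj (φ t x) * pd (pd (φ t) j) j x).im =
      -∫ x, fderiv ℝ (b t) x (EuclideanSpace.single j 1) * halfCurrent (φ t) j x := by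
  simp only [← fderiv_halfCurrent (hφ.contDiff t)]
  refine integral_mul_fderiv_eq_neg_fderiv_mul_of_integrable ?_ ?_ ?_
    (fun x _ ↦ hb.differentiable_space t x)
    (fun x _ ↦ differentiable_halfCurrent (hφ.contDiff t) j x)
  · exact ((hb.fderiv_space _).mul_rapidDecay (hφ.rapidDecay_halfCurrent j)).integrable t
  · simp only [fderiv_halfCurrent (hφ.contDiff t)]
    exact (hb.moderateGrowth.mul_rapidDecay (hφ.rapidDecay_im_conj_mul_pd_pd j)).integrable t
  · exact (hb.moderateGrowth.mul_rapidDecay (hφ.rapidDecay_halfCurrent j)).integrable t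

theorem hasDerivAt_integral_mul_norm_sq (hG : RapidDecay G) (t : ℝ) :
    HasDerivAt (fun s ↦ ∫ x, b s x * ‖φ s x‖ ^ 2)
      ((∫ x, deriv (fun s ↦ b s x) t * ‖φ t x‖ ^ 2)
        + 2 * (∑ j, ∫ x, fderiv ℝ (b t) x (EuclideanSpace.single j 1) * halfCurrent (φ t) j x)
        + 2 * ∫ x, b t x * (conj (φ t x) * G t x).im) t := by
  have hdensity := hb.moderateGrowth.mul_rapidDecay hφ.rapidDecay.norm_sq
  have htime := hb.deriv_time.mul_rapidDecay hφ.rapidDecay.norm_sq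
  have hsource := (ModerateGrowth.const 2).mul_rapidDecay
    (hb.moderateGrowth.mul_rapidDecay (hφ.rapidDecay.im_conj_mul hG))
  have hdiv (j : Fin n) := hb.moderateGrowth.mul_rapidDecay (hφ.rapidDecay_im_conj_mul_pd_pd j)
  have hdivs := (ModerateGrowth.const 2).mul_rapidDecay
    (.sum fun j (_ : j ∈ Finset.univ) ↦ hdiv j)
  refine (hdensity.hasDerivAt_integral ((htime.add hsource).sub hdivs) (fun t x ↦ ?_)
    t).congr_deriv ?_
  · refine ((hb.hasDerivAt_time t x).mul (hφ.hasDerivAt_norm_sq t x)).congr_deriv ?_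
    rw [← Finset.mul_sum]
    ring
  · have hparts : ∫ x, ∑ j, b t x * (conj (φ t x) * pd (pd (φ t) j) j x).im =
        -∑ j, ∫ x, fderiv ℝ (b t) x (EuclideanSpace.single j 1) * halfCurrent (φ t) j x := by
      rw [integral_finsetSum _ fun j _ ↦ (hdiv j).integrable t, ← Finset.sum_neg_distrib]
      exact Finset.sum_congr rfl fun j _ ↦ hφ.integral_mul_im_conj_mul_pd_pd hb j t
    rw [integral_sub ((htime.add hsource).integrable t) (hdivs.integrable t),
      integral_add (htime.integrable t) (hsource.integrable t), integral_const_mul,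
      integral_const_mul, hparts]
    ring

end IsDecayingSolution

end Balance

section Galilei

open ComplexConjugate

variable {n : ℕ}

theorem pd_add {f g : EuclideanSpace ℝ (Fin n) → ℂ} {x : EuclideanSpace ℝ (Fin n)}
    (hf : DifferentiableAt ℝ f x) (hg : DifferentiableAt ℝ g x) (i : Fin n) :
    pd (fun y ↦ f y + g y) i x = pd f i x + pd g i x := by
  simp [pd, fderiv_fun_add hf hg]

theorem pd_neg (f : EuclideanSpace ℝ (Fin n) → ℂ) (i : Fin n) (x : EuclideanSpace ℝ (Fin n)) :
    pd (fun y ↦ -f y) i x = -pd f i x := by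
  simp [pd, fderiv_fun_neg]

theorem pd_const_mul {f : EuclideanSpace ℝ (Fin n) → ℂ} {x : EuclideanSpace ℝ (Fin n)}
    (hf : DifferentiableAt ℝ f x) (c : ℂ) (i : Fin n) :
    pd (fun y ↦ c * f y) i x = c * pd f i x := by
  simp [pd, fderiv_const_mul hf]

theorem pd_ofReal_mul {u : EuclideanSpace ℝ (Fin n) → ℝ} {f : EuclideanSpace ℝ (Fin n) → ℂ}
    {x : EuclideanSpace ℝ (Fin n)} (hu : DifferentiableAt ℝ u x) (hf : DifferentiableAt ℝ f x)
    (i : Fin n) :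
    pd (fun y ↦ (u y : ℂ) * f y) i x =
      fderiv ℝ u x (EuclideanSpace.single i 1) * f x + u x * pd f i x := by
  have hmul := (ofRealCLM.hasFDerivAt.comp x hu.hasFDerivAt).mul' hf.hasFDerivAt
  rw [pd, HasFDerivAt.fderiv (f := fun y ↦ (u y : ℂ) * f y) hmul]
  simp only [Function.comp_apply, ofRealCLM_apply, op_smul_eq_smul, add_apply, smul_apply,
    smul_eq_mul, ContinuousLinearMap.comp_apply, pd]
  ring

theorem pd_sum {ι : Type*} {s : Finset ι} {f : ι → EuclideanSpace ℝ (Fin n) → ℂ}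
    {x : EuclideanSpace ℝ (Fin n)} (hf : ∀ k ∈ s, DifferentiableAt ℝ (f k) x) (i : Fin n) :
    pd (fun y ↦ ∑ k ∈ s, f k y) i x = ∑ k ∈ s, pd (f k) i x := by
  simp [pd, fderiv_fun_sum hf]

theorem pd_comm {f : EuclideanSpace ℝ (Fin n) → ℂ} (hf : ContDiff ℝ 2 f) (i j : Fin n) :
    pd (pd f i) j = pd (pd f j) i := by
  have hpd_pd (i j : Fin n) (x : EuclideanSpace ℝ (Fin n)) : pd (pd f i) j x =
      fderiv ℝ (fderiv ℝ f) x (EuclideanSpace.single j 1) (EuclideanSpace.single i 1) := by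
    have hf' := (hf.fderiv_right (m := 1) le_rfl).differentiable one_ne_zero x
    have hpd := hf'.hasFDerivAt.clm_apply (hasFDerivAt_const (EuclideanSpace.single i (1 : ℝ)) x)
    rw [pd, HasFDerivAt.fderiv (f := pd f i) hpd]
    simp
  ext x
  rw [hpd_pd, hpd_pd]
  exact hf.contDiffAt.isSymmSndFDerivAt (by simp) _ _

theorem contDiff_lap {m : WithTop ℕ∞} {f : EuclideanSpace ℝ (Fin n) → ℂ}
    (hf : ContDiff ℝ (m + 2) f) : ContDiff ℝ m (lap f) :=
  .sum fun j _ ↦ contDiff_pd (contDiff_pd (by rwa [add_assoc, one_add_one_eq_two]) j) j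

/-- The `i`-th component `xᵢ + 2it∂ᵢ` of the Galilei generator `x − 2pt`, where `p = −i∇`. -/
def galilei (t : ℝ) (i : Fin n) (f : EuclideanSpace ℝ (Fin n) → ℂ)
    (x : EuclideanSpace ℝ (Fin n)) : ℂ :=
  x i * f x + 2 * I * t * pd f i x

theorem contDiff_galilei {m : WithTop ℕ∞} {f : EuclideanSpace ℝ (Fin n) → ℂ}
    (hf : ContDiff ℝ (m + 1) f) (t : ℝ) (i : Fin n) : ContDiff ℝ m (galilei t i f) := by
  have hcoord : ContDiff ℝ m fun x : EuclideanSpace ℝ (Fin n) ↦ (x i : ℂ) :=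
    ofRealCLM.contDiff.comp (by fun_prop)
  exact (hcoord.mul (hf.of_le le_self_add)).add (contDiff_const.mul (contDiff_pd hf i))

theorem pd_coord_mul {f : EuclideanSpace ℝ (Fin n) → ℂ} {x : EuclideanSpace ℝ (Fin n)}
    (hf : DifferentiableAt ℝ f x) (i j : Fin n) :
    pd (fun y ↦ (y i : ℂ) * f y) j x = (if i = j then f x else 0) + x i * pd f j x := by
  have hcoord : HasFDerivAt (fun y : EuclideanSpace ℝ (Fin n) ↦ y i)
      (EuclideanSpace.proj i : EuclideanSpace ℝ (Fin n) →L[ℝ] ℝ) x :=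
    (EuclideanSpace.proj i : EuclideanSpace ℝ (Fin n) →L[ℝ] ℝ).hasFDerivAt
  rw [pd_ofReal_mul hcoord.differentiableAt hf, hcoord.fderiv]
  simp [apply_ite ofReal]

theorem pd_galilei {f : EuclideanSpace ℝ (Fin n) → ℂ} (hf : ContDiff ℝ 2 f) (t : ℝ)
    (i j : Fin n) :
    pd (galilei t i f) j = fun x ↦ galilei t i (pd f j) x + if i = j then f x else 0 := by
  ext x
  have hf' := hf.differentiable two_ne_zero x
  have hpd := (contDiff_pd (m := 1) hf i).differentiable one_ne_zero x
  have hcoord : DifferentiableAt ℝ (fun y : EuclideanSpace ℝ (Fin n) ↦ (y i : ℂ) * f y) x :=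
    .mul (ofRealCLM.differentiable.comp (by fun_prop) x) hf'
  unfold galilei
  rw [pd_add hcoord (hpd.const_mul _), pd_coord_mul hf', pd_const_mul hpd, pd_comm hf]
  ring

theorem pd_pd_galilei {f : EuclideanSpace ℝ (Fin n) → ℂ} (hf : ContDiff ℝ 3 f) (t : ℝ)
    (i j : Fin n) :
    pd (pd (galilei t i f) j) j =
      fun x ↦ galilei t i (pd (pd f j) j) x + if i = j then 2 * pd f j x else 0 := by
  have hpd : ContDiff ℝ 2 (pd f j) := contDiff_pd (hf.of_le (by norm_num)) j
  have hf' : ContDiff ℝ 2 f := hf.of_le (by norm_num)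
  ext x
  rw [pd_galilei hf']
  split_ifs with hij
  · rw [pd_add ((contDiff_galilei (m := 1) hpd t i).differentiable one_ne_zero x)
      (hf'.differentiable two_ne_zero x), pd_galilei hpd]
    simp only [if_pos hij]
    ring
  · simp [pd_galilei hpd, hij]

theorem lap_galilei {f : EuclideanSpace ℝ (Fin n) → ℂ} (hf : ContDiff ℝ 3 f) (t : ℝ)
    (i : Fin n) (x : EuclideanSpace ℝ (Fin n)) :
    lap (galilei t i f) x = galilei t i (lap f) x + 2 * pd f i x := by
  have hpd_pd (j : Fin n) : DifferentiableAt ℝ (pd (pd f j) j) x :=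
    (contDiff_pd (m := 1) (contDiff_pd (m := 2) hf j) j).differentiable one_ne_zero x
  have hpd_lap : pd (lap f) i x = ∑ j, pd (pd (pd f j) j) i x :=
    pd_sum (fun j _ ↦ hpd_pd j) i
  rw [galilei, hpd_lap, lap, lap]
  simp [pd_pd_galilei hf, galilei, Finset.sum_add_distrib, Finset.mul_sum]

theorem galilei_const_mul {f : EuclideanSpace ℝ (Fin n) → ℂ} {x : EuclideanSpace ℝ (Fin n)}
    (hf : DifferentiableAt ℝ f x) (c : ℂ) (t : ℝ) (i : Fin n) :
    galilei t i (fun y ↦ c * f y) x = c * galilei t i f x := by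
  rw [galilei, pd_const_mul hf, galilei]
  ring

theorem galilei_hamiltonian {u : EuclideanSpace ℝ (Fin n) → ℝ}
    {f : EuclideanSpace ℝ (Fin n) → ℂ} (hu : Differentiable ℝ u) (hf : ContDiff ℝ 3 f) (t : ℝ)
    (i : Fin n) (x : EuclideanSpace ℝ (Fin n)) :
    galilei t i (fun y ↦ -lap f y + u y * f y) x =
      -lap (galilei t i f) x + u x * galilei t i f x + 2 * pd f i x
        + 2 * I * t * fderiv ℝ u x (EuclideanSpace.single i 1) * f x := by
  have hf' : DifferentiableAt ℝ f x := hf.differentiable (by simp) x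
  have huf : DifferentiableAt ℝ (fun y ↦ (u y : ℂ) * f y) x :=
    (ofRealCLM.differentiableAt.comp x (hu x)).mul hf'
  have hlap : DifferentiableAt ℝ (fun y ↦ -lap f y) x :=
    ((contDiff_lap (m := 1) hf).differentiable one_ne_zero x).neg
  rw [lap_galilei hf, galilei, pd_add hlap huf, pd_neg, pd_ofReal_mul (hu x) hf', galilei,
    galilei]
  ring

theorem hasDerivAt_galilei {ψ : ℝ → EuclideanSpace ℝ (Fin n) → ℂ}
    (hψ : ContDiff ℝ 2 fun p : ℝ × EuclideanSpace ℝ (Fin n) ↦ ψ p.1 p.2) (t : ℝ) (i : Fin n)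
    (x : EuclideanSpace ℝ (Fin n)) :
    HasDerivAt (fun s ↦ galilei s i (ψ s) x)
      (galilei t i (tderiv ψ t) x + 2 * I * pd (ψ t) i x) t := by
  have htime : HasDerivAt (fun s ↦ ψ s x) (tderiv ψ t x) t :=
    (hasDerivAt_time_slice (hψ.differentiable two_ne_zero (t, x))).differentiableAt.hasDerivAt
  have hpd : HasDerivAt (fun s ↦ pd (ψ s) i x) (pd (tderiv ψ t) i x) t :=
    hasDerivAt_fderiv_space_slice hψ t x _
  have hcoeff : HasDerivAt (fun s : ℝ ↦ 2 * I * s) (2 * I) t := by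
    simpa using (ofRealCLM.hasDerivAt (x := t)).const_mul (2 * I)
  refine ((htime.const_mul (x i : ℂ)).add (hcoeff.mul hpd)).congr_deriv ?_
  rw [galilei]
  ring

theorem im_conj_galilei_mul (f : EuclideanSpace ℝ (Fin n) → ℂ) (t a : ℝ) (i : Fin n)
    (x : EuclideanSpace ℝ (Fin n)) :
    (conj (galilei t i f x) * (2 * I * t * a * f x)).im =
      2 * t * (a * (x i * ‖f x‖ ^ 2)) - 4 * t ^ 2 * (a * halfCurrent f i x) := by
  simp only [← normSq_eq_norm_sq, normSq_apply, galilei, halfCurrent, map_add, map_mul, conj_I,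
    map_ofNat, conj_ofReal, mul_re, mul_im, add_re, add_im, neg_re, neg_im, I_re, I_im, conj_re,
    conj_im, ofReal_re, ofReal_im, re_ofNat, im_ofNat]
  ring

end Galilei

section Schwartz

open Filter Topology Asymptotics
open scoped ContDiff

variable {n : ℕ}

theorem ModerateGrowth.coord (i : Fin n) :
    ModerateGrowth fun _ (x : EuclideanSpace ℝ (Fin n)) ↦ x i where
  continuous _ := by fun_prop
  isBigO _ := ⟨1, .of_bound 1 (.of_forall fun p ↦ by
    have hpos : 0 ≤ 1 + ‖p.2‖ := by positivity
    rw [pow_one, one_mul, Real.norm_of_nonneg hpos]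
    exact (PiLp.norm_apply_le p.2 i).trans (le_add_of_nonneg_left zero_le_one))⟩

theorem RapidDecay.fun_galilei {f : ℝ → EuclideanSpace ℝ (Fin n) → ℂ} {i : Fin n}
    (hf : RapidDecay f) (hpd : RapidDecay fun t ↦ pd (f t) i) :
    RapidDecay fun t ↦ galilei t i (f t) := by
  have hcoord := (ModerateGrowth.coord i).smul_rapidDecay hf
  have hcoeff : ModerateGrowth fun (t : ℝ) (_ : EuclideanSpace ℝ (Fin n)) ↦ 2 * I * t :=
    .of_continuous_time (by fun_prop)
  exact hcoord.add (hcoeff.mul_rapidDecay hpd)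

theorem xdotGrad_add {u v : EuclideanSpace ℝ (Fin n) → ℝ} {x : EuclideanSpace ℝ (Fin n)}
    (hu : DifferentiableAt ℝ u x) (hv : DifferentiableAt ℝ v x) :
    xdotGrad (fun y ↦ u y + v y) x = xdotGrad u x + xdotGrad v x := by
  simp only [xdotGrad, fderiv_fun_add hu hv, add_apply, mul_add, Finset.sum_add_distrib]

theorem xdotGrad_mul (u : EuclideanSpace ℝ (Fin n) → ℝ) (x : EuclideanSpace ℝ (Fin n)) (c : ℝ) :
    xdotGrad u x * c = ∑ i, fderiv ℝ u x (EuclideanSpace.single i 1) * (x i * c) := by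
  rw [xdotGrad, Finset.sum_mul]
  exact Finset.sum_congr rfl fun i _ ↦ by ring

theorem ModerateC1.rapidDecay_fderiv_mul_coord {U : ℝ → EuclideanSpace ℝ (Fin n) → ℝ}
    {f : ℝ → EuclideanSpace ℝ (Fin n) → ℝ} (hU : ModerateC1 U) (hf : RapidDecay f) (i : Fin n) :
    RapidDecay fun t x ↦ fderiv ℝ (U t) x (EuclideanSpace.single i 1) * (x i * f t x) :=
  (hU.fderiv_space _).mul_rapidDecay ((ModerateGrowth.coord i).mul_rapidDecay hf)

theorem ModerateC1.integrable_xdotGrad_mul {U : ℝ → EuclideanSpace ℝ (Fin n) → ℝ}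
    {f : ℝ → EuclideanSpace ℝ (Fin n) → ℝ} (hU : ModerateC1 U) (hf : RapidDecay f) (t : ℝ) :
    Integrable fun x ↦ xdotGrad (U t) x * f t x := by
  simp only [xdotGrad_mul]
  exact integrable_finsetSum _ fun i _ ↦ (hU.rapidDecay_fderiv_mul_coord hf i).integrable t

namespace LocUnifSchwartz

variable {ψ : ℝ → EuclideanSpace ℝ (Fin n) → ℂ} (hS : LocUnifSchwartz ψ)
include hS

theorem rapidDecay (hψ : ∀ t, Continuous (ψ t)) : RapidDecay ψ where
  continuous := hψ
  isBigO t k := by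
    obtain ⟨C, hC⟩ := hS 0 0 (|t| + 1)
    obtain ⟨D, hD⟩ := hS k 0 (|t| + 1)
    have ht : Set.Icc (-(|t| + 1)) (|t| + 1) ∈ 𝓝 t :=
      Icc_mem_nhds (by linarith [neg_abs_le t]) (by linarith [le_abs_self t])
    refine .of_bound (2 ^ (k - 1) * (C + D)) (mem_prod_top.2 ?_)
    filter_upwards [ht] with s hs x
    have hCx := hC s hs x
    have hDx := hD s hs x
    simp only [norm_iteratedFDeriv_zero, pow_zero, one_mul] at hCx hDx
    rw [Real.norm_of_nonneg (by positivity), ← div_eq_mul_inv, le_div_iff₀ (by positivity)]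
    calc ‖ψ s x‖ * (1 + ‖x‖) ^ k
        ≤ ‖ψ s x‖ * (2 ^ (k - 1) * (1 ^ k + ‖x‖ ^ k)) := by
          gcongr
          exact add_pow_le zero_le_one (norm_nonneg x) k
      _ = 2 ^ (k - 1) * (‖ψ s x‖ + ‖x‖ ^ k * ‖ψ s x‖) := by ring
      _ ≤ 2 ^ (k - 1) * (C + D) := by gcongr

variable (hψ : ∀ t, ContDiff ℝ ∞ (ψ t))
include hψ

theorem fun_pd (i : Fin n) : LocUnifSchwartz fun t ↦ pd (ψ t) i := by
  intro k m T
  obtain ⟨C, hC⟩ := hS k (m + 1) T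
  refine ⟨C, fun t ht x ↦ le_trans ?_ (hC t ht x)⟩
  gcongr
  have hfderiv : ContDiff ℝ m (fderiv ℝ (ψ t)) := (hψ t).fderiv_right (by exact_mod_cast le_top)
  have hle := norm_iteratedFDeriv_clm_apply_const (c := EuclideanSpace.single i (1 : ℝ))
    hfderiv.contDiffAt (x := x) le_rfl
  rwa [PiLp.norm_single, norm_one, one_mul, norm_iteratedFDeriv_fderiv] at hle

theorem rapidDecay_pd (i : Fin n) : RapidDecay fun t ↦ pd (ψ t) i :=
  (hS.fun_pd hψ i).rapidDecay fun t ↦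
    (contDiff_pd (m := 0) ((hψ t).of_le (by simp)) i).continuous

theorem rapidDecay_galilei (i : Fin n) : RapidDecay fun t ↦ galilei t i (ψ t) :=
  (hS.rapidDecay fun t ↦ (hψ t).continuous).fun_galilei (hS.rapidDecay_pd hψ i)

theorem rapidDecay_pd_galilei (i j : Fin n) : RapidDecay fun t ↦ pd (galilei t i (ψ t)) j := by
  simp only [pd_galilei ((hψ _).of_le ENat.LEInfty.out)]
  refine ((hS.fun_pd hψ j).rapidDecay_galilei (fun t ↦ contDiff_pd (hψ t) j) i).add ?_
  split_ifs
  exacts [hS.rapidDecay fun t ↦ (hψ t).continuous, .zero]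

theorem rapidDecay_pd_pd_galilei (i j : Fin n) :
    RapidDecay fun t ↦ pd (pd (galilei t i (ψ t)) j) j := by
  have hpd (t : ℝ) : ContDiff ℝ ∞ (pd (ψ t) j) := contDiff_pd (hψ t) j
  simp only [pd_pd_galilei ((hψ _).of_le ENat.LEInfty.out)]
  refine (((hS.fun_pd hψ j).fun_pd hpd j).rapidDecay_galilei
    (fun t ↦ contDiff_pd (hpd t) j) i).add ?_
  split_ifs
  exacts [(ModerateGrowth.const 2).mul_rapidDecay (hS.rapidDecay_pd hψ j), .zero]

end LocUnifSchwartz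

variable {U : ℝ → EuclideanSpace ℝ (Fin n) → ℝ} {ψ : ℝ → EuclideanSpace ℝ (Fin n) → ℂ}
  (hψ : ContDiff ℝ ∞ fun p : ℝ × EuclideanSpace ℝ (Fin n) ↦ ψ p.1 p.2) (hS : LocUnifSchwartz ψ)
include hψ hS

theorem LocUnifSchwartz.isDecayingSolution
    (heq : ∀ t x, I * tderiv ψ t x = -lap (ψ t) x + U t x * ψ t x) :
    IsDecayingSolution U 0 ψ := by
  have hslice (t : ℝ) : ContDiff ℝ ∞ (ψ t) := hψ.comp (contDiff_prodMk_right t)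
  refine ⟨fun t ↦ (hslice t).of_le ENat.LEInfty.out,
    hS.rapidDecay fun t ↦ (hslice t).continuous, hS.rapidDecay_pd hslice,
    fun j ↦ (hS.fun_pd hslice j).rapidDecay_pd (fun t ↦ contDiff_pd (hslice t) j) j, fun t x ↦ ?_⟩
  have htime := hasDerivAt_time_slice (hψ.differentiable (by simp) (t, x))
  refine htime.differentiableAt.hasDerivAt.congr_deriv ?_
  rw [Pi.zero_apply, Pi.zero_apply, add_zero, ← heq, tderiv, ← mul_assoc, neg_mul, I_mul_I,
    neg_neg, one_mul]

variable (hU : ModerateC1 U) (hsol : IsDecayingSolution U 0 ψ)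
include hU hsol

theorem IsDecayingSolution.fun_galilei (i : Fin n) :
    IsDecayingSolution U
      (fun t x ↦ 2 * I * t * fderiv ℝ (U t) x (EuclideanSpace.single i 1) * ψ t x)
      fun t ↦ galilei t i (ψ t) := by
  have hslice (t : ℝ) : ContDiff ℝ ∞ (ψ t) := hψ.comp (contDiff_prodMk_right t)
  have hslice3 (t : ℝ) : ContDiff ℝ 3 (ψ t) := (hslice t).of_le ENat.LEInfty.out
  refine ⟨fun t ↦ contDiff_galilei (hslice3 t) t i, hS.rapidDecay_galilei hslice i,
    hS.rapidDecay_pd_galilei hslice i, hS.rapidDecay_pd_pd_galilei hslice i, fun t x ↦ ?_⟩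
  have htime : tderiv ψ t = fun y ↦ -I * (-lap (ψ t) y + U t y * ψ t y) :=
    funext fun y ↦ by simpa [tderiv] using (hsol.hasDerivAt t y).deriv
  have hham : DifferentiableAt ℝ (fun y ↦ -lap (ψ t) y + U t y * ψ t y) x :=
    .add ((contDiff_lap (m := 1) (hslice3 t)).differentiable one_ne_zero x).neg
      (.mul (ofRealCLM.differentiableAt.comp x (hU.differentiable_space t x))
        ((hslice t).differentiable (by simp) x))
  refine (hasDerivAt_galilei (hψ.of_le ENat.LEInfty.out) t i x).congr_deriv ?_
  rw [htime, galilei_const_mul hham,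
    galilei_hamiltonian (hU.differentiable_space t) (hslice3 t)]
  ring

theorem hasDerivAt_integral_norm_sq_galilei (i : Fin n) (t : ℝ) :
    HasDerivAt (fun s ↦ ∫ x, ‖galilei s i (ψ s) x‖ ^ 2)
      (4 * t * (∫ x, fderiv ℝ (U t) x (EuclideanSpace.single i 1) * (x i * ‖ψ t x‖ ^ 2))
        - 8 * t ^ 2 *
          ∫ x, fderiv ℝ (U t) x (EuclideanSpace.single i 1) * halfCurrent (ψ t) i x) t := by
  have hgrad := hU.fderiv_space (EuclideanSpace.single i 1)
  have hmoment := hU.rapidDecay_fderiv_mul_coord hsol.rapidDecay.norm_sq i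
  have hcurrent := hgrad.mul_rapidDecay (hsol.rapidDecay_halfCurrent i)
  have hforce : RapidDecay fun t x ↦
      2 * I * t * fderiv ℝ (U t) x (EuclideanSpace.single i 1) * ψ t x := by
    have hcoeff : ModerateGrowth fun (t : ℝ) (_ : EuclideanSpace ℝ (Fin n)) ↦ 2 * I * t :=
      .of_continuous_time (by fun_prop)
    simpa only [real_smul, mul_assoc] using
      hcoeff.mul_rapidDecay (hgrad.smul_rapidDecay hsol.rapidDecay)
  have hbalance :=
    (hsol.fun_galilei hψ hS hU i).hasDerivAt_integral_mul_norm_sq (.const 1) hforce t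
  simp only [one_mul, deriv_const, zero_mul, integral_zero, fderiv_fun_const, Pi.zero_apply,
    zero_apply, Finset.sum_const_zero, mul_zero, zero_add, im_conj_galilei_mul] at hbalance
  refine hbalance.congr_deriv ?_
  rw [integral_sub ((hmoment.integrable t).const_mul _) ((hcurrent.integrable t).const_mul _),
    integral_const_mul, integral_const_mul]
  ring

theorem hasDerivAt_conformalFactor (t : ℝ) :
    HasDerivAt (conformalFactor ψ)
      (4 * t * (∫ x, xdotGrad (U t) x * ‖ψ t x‖ ^ 2)
        - 8 * t ^ 2 *
          ∑ i, ∫ x, fderiv ℝ (U t) x (EuclideanSpace.single i 1) * halfCurrent (ψ t) i x) t := by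
  have hconformal : conformalFactor ψ = fun s ↦ ∑ i, ∫ x, ‖galilei s i (ψ s) x‖ ^ 2 :=
    funext fun s ↦ integral_finsetSum _ fun i _ ↦
      (hsol.fun_galilei hψ hS hU i).rapidDecay.norm_sq.integrable s
  have hmoment := hU.rapidDecay_fderiv_mul_coord hsol.rapidDecay.norm_sq
  simp only [xdotGrad_mul]
  rw [hconformal, integral_finsetSum _ fun i _ ↦ (hmoment i).integrable t, Finset.mul_sum,
    Finset.mul_sum, ← Finset.sum_sub_distrib]
  exact HasDerivAt.fun_sum fun i _ ↦ hasDerivAt_integral_norm_sq_galilei hψ hS hU hsol i t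

end Schwartz

section Pseudoconformal

open scoped ContDiff

variable {n : ℕ}

theorem pseudoconformal_identity_unscaled_general {U : ℝ → EuclideanSpace ℝ (Fin n) → ℝ}
    {ψ : ℝ → EuclideanSpace ℝ (Fin n) → ℂ} (hU : ModerateC1 U)
    (hψ : ContDiff ℝ ∞ fun p : ℝ × EuclideanSpace ℝ (Fin n) ↦ ψ p.1 p.2) (hS : LocUnifSchwartz ψ)
    (heq : ∀ t x, I * tderiv ψ t x = -lap (ψ t) x + U t x * ψ t x) (t : ℝ) :
    HasDerivAt (fun s ↦ conformalFactor ψ s + 4 * s ^ 2 * ∫ x, U s x * ‖ψ s x‖ ^ 2)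
      (4 * t * (∫ x, (xdotGrad (U t) x + 2 * U t x) * ‖ψ t x‖ ^ 2)
        + 4 * t ^ 2 * ∫ x, deriv (fun s ↦ U s x) t * ‖ψ t x‖ ^ 2) t := by
  have hsol := hS.isDecayingSolution hψ heq
  have hpotential := hsol.hasDerivAt_integral_mul_norm_sq hU .zero t
  have hsq : HasDerivAt (fun s : ℝ ↦ 4 * s ^ 2) (8 * t) t :=
    ((hasDerivAt_pow 2 t).const_mul 4).congr_deriv (by ring)
  have hsplit : ∫ x, (xdotGrad (U t) x + 2 * U t x) * ‖ψ t x‖ ^ 2 =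
      (∫ x, xdotGrad (U t) x * ‖ψ t x‖ ^ 2) + 2 * ∫ x, U t x * ‖ψ t x‖ ^ 2 := by
    have hdensity := hsol.rapidDecay.norm_sq
    simp only [add_mul, mul_assoc]
    rw [integral_add (hU.integrable_xdotGrad_mul hdensity t)
      (((hU.moderateGrowth.mul_rapidDecay hdensity).integrable t).const_mul 2), integral_const_mul]
  -- The current terms of the two derivatives cancel.
  refine ((hasDerivAt_conformalFactor hψ hS hU hsol t).add (hsq.mul hpotential)).congr_deriv ?_
  simp only [Pi.zero_apply, mul_zero, zero_im, integral_zero, add_zero, hsplit]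
  ring

end Pseudoconformal

/-- The (unscaled) pseudoconformal identity for `H(t) = −Δ + V(x) + W(x,t)`:
the function `t ↦ ‖(x−2pt)ψ(t)‖² + 4t²∫(V+W)|ψ|²` is differentiable with
derivative `4t∫(x·∇V + x·∇ₓW + 2V + 2W)|ψ|² + 4t²∫∂ₜW|ψ|²`. -/
theorem pseudoconformal_identity_unscaled {n : ℕ} (hn : 1 ≤ n)
    (V : EuclideanSpace ℝ (Fin n) → ℝ) (hV : ContDiff ℝ (⊤ : ℕ∞) V)
    (hVbd : ∀ m : ℕ, ∃ C : ℝ, ∀ x, ‖iteratedFDeriv ℝ m V x‖ ≤ C)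
    (W : ℝ → EuclideanSpace ℝ (Fin n) → ℝ)
    (hW : ContDiff ℝ (⊤ : ℕ∞) (fun p : ℝ × EuclideanSpace ℝ (Fin n) => W p.1 p.2))
    (hWbd : ∀ m : ℕ, ∃ C : ℝ, ∀ p : ℝ × EuclideanSpace ℝ (Fin n),
      ‖iteratedFDeriv ℝ m (fun q : ℝ × EuclideanSpace ℝ (Fin n) => W q.1 q.2) p‖ ≤ C)
    (ψ : ℝ → EuclideanSpace ℝ (Fin n) → ℂ)
    (hψ : ContDiff ℝ (⊤ : ℕ∞) (fun p : ℝ × EuclideanSpace ℝ (Fin n) => ψ p.1 p.2))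
    (hS : LocUnifSchwartz ψ)
    (hS' : LocUnifSchwartz (fun t => tderiv ψ t))
    (heq : ∀ t x, Complex.I * tderiv ψ t x
      = -lap (ψ t) x + (V x : ℂ) * ψ t x + (W t x : ℂ) * ψ t x) :
    ∀ t : ℝ,
      HasDerivAt (fun s => conformalFactor ψ s
          + 4 * s ^ 2 * ∫ x : EuclideanSpace ℝ (Fin n), (V x + W s x) * ‖ψ s x‖ ^ 2)
        (4 * t * (∫ x : EuclideanSpace ℝ (Fin n),
            (xdotGrad V x + xdotGrad (W t) x + 2 * V x + 2 * W t x) * ‖ψ t x‖ ^ 2)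
          + 4 * t ^ 2 * ∫ x : EuclideanSpace ℝ (Fin n),
              deriv (fun s => W s x) t * ‖ψ t x‖ ^ 2) t := by
  intro t
  have hV1 : ContDiff ℝ 1 V := hV.of_le ENat.LEInfty.out
  have hVmod : ModerateC1 fun (_ : ℝ) ↦ V := .of_bounded_static hV1 fun m _ ↦ hVbd m
  have hWmod : ModerateC1 W := .of_bounded (hW.of_le ENat.LEInfty.out) fun m _ ↦ hWbd m
  have hidentity := pseudoconformal_identity_unscaled_general (hVmod.add hWmod) hψ hS
    (fun t x ↦ by rw [heq]; push_cast; ring) t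
  have hxdotGrad (x : EuclideanSpace ℝ (Fin n)) :
      xdotGrad (fun y ↦ V y + W t y) x = xdotGrad V x + xdotGrad (W t) x :=
    xdotGrad_add (hVmod.differentiable_space t x) (hWmod.differentiable_space t x)
  simpa only [hxdotGrad, deriv_const_add, mul_add, ← add_assoc] using hidentity

end
end
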